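/- arXiv:2508.01496 — 10 statements merged into one kernel-verified Lean document; each statement's English description precedes it below -/
import Mathlib

section
/- With ▷, ◁, ·, τ defined from the unique factorisation G = RK, the quasiaction ◁ satisfies: (xy)◁r = (x◁(y▷r))(y◁r), e◁r = e, x◁e = x, and (x◁r)◁s = τ(x▷r, (x◁r)▷s)⁻¹ (x◁(r·s)) τ(r,s), for all x, y ∈ K and r, s ∈ R. -/
/-! Each identity compares the `K`-components of two factorisations in `R K` of one element of `G`
(`x y r`, `r`, `x` and `x r s` respectively); these agree because the factorisation is unique. -/

/-- With `▷, ◁, ·, τ` defined from the unique factorisation `G = RK`,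
the quasiaction `◁` satisfies `(xy) ◁ r = (x ◁ (y ▷ r))(y ◁ r)`, `e ◁ r = e`, `x ◁ e = x`,
and `(x ◁ r) ◁ s = τ(x ▷ r, (x ◁ r) ▷ s)⁻¹ (x ◁ (r·s)) τ(r,s)`, for all `x, y ∈ K` and
`r, s ∈ R`. -/
theorem statement1 {G : Type*} [Group G] (K : Subgroup G) (R : Set G)
    (heR : (1 : G) ∈ R)
    (huniq : ∀ g : G, ∃! p : R × K, g = (p.1 : G) * (p.2 : G))
    (act : K → R → R) (coact : K → R → K)
    (hfac : ∀ (x : K) (r : R), (x : G) * (r : G) = (act x r : G) * (coact x r : G))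
    (mul : R → R → R) (tau : R → R → K)
    (hfac2 : ∀ r s : R, (r : G) * (s : G) = (mul r s : G) * (tau r s : G)) :
    (∀ (x y : K) (r : R), coact (x * y) r = coact x (act y r) * coact y r) ∧
    (∀ r : R, coact 1 r = 1) ∧
    (∀ x : K, coact x ⟨1, heR⟩ = x) ∧
    (∀ (x : K) (r s : R),
      coact (coact x r) s
        = (tau (act x r) (act (coact x r) s))⁻¹ * coact x (mul r s) * tau r s) := by
  have key : ∀ (a b : R) (k l : K), (a : G) * (k : G) = (b : G) * (l : G) → k = l := by
    intro a b k l h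
    have hp := (huniq ((a : G) * k)).unique (y₁ := (a, k)) (y₂ := (b, l)) rfl h
    exact congrArg Prod.snd hp
  refine ⟨fun x y r => ?_, fun r => ?_, fun x => ?_, fun x r s => ?_⟩
  · -- Both sides are the `K`-component of `x y r`.
    apply key (act (x * y) r) (act x (act y r))
    rw [← hfac, Subgroup.coe_mul, Subgroup.coe_mul, ← mul_assoc, ← hfac, mul_assoc, mul_assoc,
      hfac y r]
  · apply key (act 1 r) r
    rw [← hfac]
    simp
  · apply key (act x ⟨1, heR⟩) ⟨1, heR⟩
    rw [← hfac]
    simp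
  · -- After moving `τ` to the left, both sides are the `K`-component of `x r s`.
    rw [mul_assoc, eq_inv_mul_iff_mul_eq]
    apply key (mul (act x r) (act (coact x r) s)) (act x (mul r s))
    rw [Subgroup.coe_mul, Subgroup.coe_mul, ← mul_assoc, ← mul_assoc, ← hfac2, ← hfac,
      mul_assoc, ← hfac, mul_assoc, ← hfac2, ← mul_assoc, ← hfac, mul_assoc]
end

section
/- With ▷, ◁, ·, τ defined from the unique factorisation G = RK, the cocycle τ and the product · satisfy: τ(r, s·t) τ(s,t) = τ(r·s, τ(r,s)▷t) (τ(r,s)◁t), τ(e,r) = τ(r,e) = e, r·(s·t) = (r·s)·(τ(r,s)▷t), and r·e = e·r = r, for all r, s, t ∈ R. -/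
/-!
Associativity in `G` gives two factorisations of `r s t` in `R K`: bracketing as `r (s t)` yields
`(r·(s·t)) (τ(r, s·t) τ(s,t))`, bracketing as `(r s) t` yields
`((r·s)·(τ(r,s) ▷ t)) (τ(r·s, τ(r,s) ▷ t) (τ(r,s) ◁ t))`. Uniqueness of the factorisation equates
the `R`-parts and the `K`-parts. The unit laws follow in the same way from `r e = e r = r`.
-/

/-- With `▷, ◁, ·, τ` defined from the unique factorisation `G = RK`,
the cocycle `τ` and the product `·` satisfy
`τ(r, s·t) τ(s,t) = τ(r·s, τ(r,s) ▷ t) (τ(r,s) ◁ t)`, `τ(e,r) = τ(r,e) = e`,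
`r·(s·t) = (r·s)·(τ(r,s) ▷ t)`, and `r·e = e·r = r`, for all `r, s, t ∈ R`. -/
theorem statement2 {G : Type*} [Group G] (K : Subgroup G) (R : Set G)
    (heR : (1 : G) ∈ R)
    (huniq : ∀ g : G, ∃! p : R × K, g = (p.1 : G) * (p.2 : G))
    (act : K → R → R) (coact : K → R → K)
    (hfac : ∀ (x : K) (r : R), (x : G) * (r : G) = (act x r : G) * (coact x r : G))
    (mul : R → R → R) (tau : R → R → K)
    (hfac2 : ∀ r s : R, (r : G) * (s : G) = (mul r s : G) * (tau r s : G)) :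
    (∀ r s t : R,
      tau r (mul s t) * tau s t
        = tau (mul r s) (act (tau r s) t) * coact (tau r s) t) ∧
    (∀ r : R, tau ⟨1, heR⟩ r = 1 ∧ tau r ⟨1, heR⟩ = 1) ∧
    (∀ r s t : R, mul r (mul s t) = mul (mul r s) (act (tau r s) t)) ∧
    (∀ r : R, mul r ⟨1, heR⟩ = r ∧ mul ⟨1, heR⟩ r = r) := by
  have key : ∀ (a b : R) (x y : K), (a : G) * x = b * y → a = b ∧ x = y := by
    intro a b x y h
    have h' := (huniq ((a : G) * x)).unique (y₁ := (a, x)) (y₂ := (b, y)) rfl h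
    exact Prod.mk.inj h'
  have assoc : ∀ r s t : R,
      mul r (mul s t) = mul (mul r s) (act (tau r s) t) ∧
      tau r (mul s t) * tau s t
        = tau (mul r s) (act (tau r s) t) * coact (tau r s) t := by
    intro r s t
    apply key
    rw [Subgroup.coe_mul, Subgroup.coe_mul, ← mul_assoc, ← hfac2, mul_assoc, ← hfac2,
      ← mul_assoc, ← mul_assoc, ← hfac2, mul_assoc (mul r s : G), ← hfac, ← mul_assoc, ← hfac2]
  have unit_left : ∀ r : R, mul ⟨1, heR⟩ r = r ∧ tau ⟨1, heR⟩ r = 1 := by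
    intro r
    apply key
    rw [← hfac2]
    simp
  have unit_right : ∀ r : R, mul r ⟨1, heR⟩ = r ∧ tau r ⟨1, heR⟩ = 1 := by
    intro r
    apply key
    rw [← hfac2]
    simp
  exact ⟨fun r s t => (assoc r s t).2, fun r => ⟨(unit_left r).2, (unit_right r).2⟩,
    fun r s t => (assoc r s t).1, fun r => ⟨(unit_right r).1, (unit_left r).1⟩⟩
end

section
/- The magma (R, ·) has e as a two-sided identity element and has the left division property: for all s, t ∈ R there is a unique r ∈ R such that s·r = t. In particular, every r ∈ R has a unique right inverse r^R ∈ R satisfying r·(r^R) = e. -/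
/-! The `R`-component of an element of `G = RK` depends only on its left coset of `K`, so `s·r` is
the representative of the coset `srK`. Hence `s·r = t` holds exactly when `r` is the
representative of `s⁻¹tK`, which gives left division; the right inverse of `r` is the case
`t = e`. -/

/-- The magma `(R, ·)` (with `·` defined from the unique factorisation
`G = RK`) has `e` as a two-sided identity element and has the left division property: for
all `s, t ∈ R` there is a unique `r ∈ R` such that `s·r = t`.  In particular, every
`r ∈ R` has a unique right inverse `r^R ∈ R` satisfying `r·(r^R) = e`. -/
theorem statement3 {G : Type*} [Group G] (K : Subgroup G) (R : Set G)
    (heR : (1 : G) ∈ R)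
    (huniq : ∀ g : G, ∃! p : R × K, g = (p.1 : G) * (p.2 : G))
    (act : K → R → R) (coact : K → R → K)
    (hfac : ∀ (x : K) (r : R), (x : G) * (r : G) = (act x r : G) * (coact x r : G))
    (mul : R → R → R) (tau : R → R → K)
    (hfac2 : ∀ r s : R, (r : G) * (s : G) = (mul r s : G) * (tau r s : G)) :
    (∀ r : R, mul r ⟨1, heR⟩ = r ∧ mul ⟨1, heR⟩ r = r) ∧
    (∀ s t : R, ∃! r : R, mul s r = t) ∧
    (∀ r : R, ∃! rR : R, mul r rR = ⟨1, heR⟩) := by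
  -- The `R`-component of a factorisation in `G = RK` is unique.
  have key : ∀ (a b : R) (x y : K), (a : G) * x = (b : G) * y → a = b := by
    intro a b x y h
    exact congrArg Prod.fst
      ((huniq ((a : G) * x)).unique (y₁ := (a, x)) (y₂ := (b, y)) rfl h)
  have div : ∀ s t : R, ∃! r : R, mul s r = t := by
    intro s t
    obtain ⟨⟨r, x⟩, hrx, -⟩ := huniq ((s : G)⁻¹ * t)
    have hrx : (s : G)⁻¹ * t = r * x := hrx
    have ht : (t : G) = s * (r * x) := by rw [← hrx, mul_inv_cancel_left]
    refine ⟨r, ?_, ?_⟩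
    · apply key _ _ (tau s r * x) 1
      rw [Subgroup.coe_mul, ← mul_assoc, ← hfac2, ht]
      simp [mul_assoc]
    · intro r' hr'
      have hr' : mul s r' = t := hr'
      apply key _ _ 1 (x * tau s r')
      have h := hfac2 s r'
      rw [hr', ht, mul_assoc] at h
      simpa [mul_assoc] using h
  refine ⟨fun r => ⟨?_, ?_⟩, div, fun r => div r _⟩
  · apply key _ _ (tau r ⟨1, heR⟩) 1
    rw [← hfac2]
    simp
  · apply key _ _ (tau ⟨1, heR⟩ r) 1
    rw [← hfac2]
    simp
end

section
/- For all r ∈ R: τ(r, r^R)⁻¹ ◁ r = τ(r^R, (r^R)^R)⁻¹, and τ(r, r^R)⁻¹ ▷ r = (r^R)^R. -/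
/-- With `▷, ◁, ·, τ` defined from the unique factorisation `G = RK`
and `r^R` the unique right inverse of `r` in `(R,·)`:  for all `r ∈ R`,
`τ(r, r^R)⁻¹ ◁ r = τ(r^R, (r^R)^R)⁻¹` and `τ(r, r^R)⁻¹ ▷ r = (r^R)^R`. -/
theorem statement5 {G : Type*} [Group G] (K : Subgroup G) (R : Set G)
    (heR : (1 : G) ∈ R)
    (huniq : ∀ g : G, ∃! p : R × K, g = (p.1 : G) * (p.2 : G))
    (act : K → R → R) (coact : K → R → K)
    (hfac : ∀ (x : K) (r : R), (x : G) * (r : G) = (act x r : G) * (coact x r : G))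
    (mul : R → R → R) (tau : R → R → K)
    (hfac2 : ∀ r s : R, (r : G) * (s : G) = (mul r s : G) * (tau r s : G))
    (rinv : R → R) (hrinv : ∀ r : R, mul r (rinv r) = ⟨1, heR⟩) :
    (∀ r : R, coact (tau r (rinv r))⁻¹ r = (tau (rinv r) (rinv (rinv r)))⁻¹) ∧
    (∀ r : R, act (tau r (rinv r))⁻¹ r = rinv (rinv r)) := by
  have hone : ∀ r : R, (r : G) * (rinv r : G) = (tau r (rinv r) : G) := fun r => by
    rw [hfac2, hrinv, one_mul]
  -- With `s = r^R` and `u = s^R`, the relations `r s = τ(r,s)` and `s u = τ(s,u)` give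
  -- `τ(r,s)⁻¹ r = s⁻¹ = u τ(s,u)⁻¹`; both claims follow by uniqueness of the factorisation.
  have key : ∀ r : R, (act (tau r (rinv r))⁻¹ r, coact (tau r (rinv r))⁻¹ r) =
      (rinv (rinv r), (tau (rinv r) (rinv (rinv r)))⁻¹) := fun r => by
    refine (huniq (((tau r (rinv r))⁻¹ : K) * (r : G))).unique (hfac _ _) ?_
    simp only [Subgroup.coe_inv, ← hone]
    group
  exact ⟨fun r => congrArg Prod.snd (key r), fun r => congrArg Prod.fst (key r)⟩
end

section
/- For all x ∈ K and r, s ∈ R, the matched-pair data of the two transversals are related by: x ▷̄ r̄ = (x▷r)·c_{x▷r} (i.e. x ▷̄ r̄ is the R̄-representative of x▷r), x ◁̄ r̄ = c_{x▷r}⁻¹ (x◁r) c_r, r̄ ·̄ s̄ equals the R̄-representative of r·(c_r▷s), and τ̄(r̄, s̄) = c_{r·(c_r▷s)}⁻¹ τ(r, c_r▷s) (c_r◁s) c_s. -/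
/-!
Both `x r̄` and `r̄ s̄` can be factorised in `R̄ K` in two ways: by the barred operations, and by
substituting `r̄ = r c_r`, factorising in `R K`, and replacing each `t ∈ R` by `t̄ c_t⁻¹`:
`x r c_r = (x▷r)(x◁r) c_r` and `r c_r s c_s = (r·(c_r▷s)) τ(r, c_r▷s) (c_r◁s) c_s`.
Uniqueness of the factorisation in `R̄ K` identifies the two, giving all the formulas.
-/

/-- Let `R` and `R̄` be two transversals of `G/K` containing `e`, with
matched-pair data `(▷, ◁, ·, τ)` resp. `(▷̄, ◁̄, ·̄, τ̄)` defined from the respective unique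
factorisations.  For `r ∈ R`, let `r̄ ∈ R̄` be the representative of the same coset and
`c_r := r⁻¹ r̄ ∈ K`.  Then for all `x ∈ K` and `r, s ∈ R`:
`x ▷̄ r̄ = (x ▷ r) c_{x▷r}` (i.e. `x ▷̄ r̄` is the `R̄`-representative of `x ▷ r`),
`x ◁̄ r̄ = c_{x▷r}⁻¹ (x ◁ r) c_r`,  `r̄ ·̄ s̄` equals the `R̄`-representative of
`r·(c_r ▷ s)`, and `τ̄(r̄, s̄) = c_{r·(c_r▷s)}⁻¹ τ(r, c_r ▷ s) (c_r ◁ s) c_s`. -/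
theorem statement7 {G : Type*} [Group G] (K : Subgroup G) (R Rb : Set G)
    (heR : (1 : G) ∈ R) (heRb : (1 : G) ∈ Rb)
    (huniq : ∀ g : G, ∃! p : R × K, g = (p.1 : G) * (p.2 : G))
    (huniqb : ∀ g : G, ∃! p : Rb × K, g = (p.1 : G) * (p.2 : G))
    (act : K → R → R) (coact : K → R → K)
    (hfac : ∀ (x : K) (r : R), (x : G) * (r : G) = (act x r : G) * (coact x r : G))
    (mul : R → R → R) (tau : R → R → K)
    (hfac2 : ∀ r s : R, (r : G) * (s : G) = (mul r s : G) * (tau r s : G))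
    (actb : K → Rb → Rb) (coactb : K → Rb → K)
    (hfacb : ∀ (x : K) (r : Rb), (x : G) * (r : G) = (actb x r : G) * (coactb x r : G))
    (mulb : Rb → Rb → Rb) (taub : Rb → Rb → K)
    (hfac2b : ∀ r s : Rb, (r : G) * (s : G) = (mulb r s : G) * (taub r s : G))
    (bar : R → Rb) (c : R → K)
    (hbar : ∀ r : R, (bar r : G) = (r : G) * (c r : G)) :
    (∀ (x : K) (r : R), (actb x (bar r) : G) = (act x r : G) * (c (act x r) : G)) ∧
    (∀ (x : K) (r : R), actb x (bar r) = bar (act x r)) ∧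
    (∀ (x : K) (r : R), coactb x (bar r) = (c (act x r))⁻¹ * coact x r * c r) ∧
    (∀ r s : R, mulb (bar r) (bar s) = bar (mul r (act (c r) s))) ∧
    (∀ r s : R,
      taub (bar r) (bar s)
        = (c (mul r (act (c r) s)))⁻¹ * tau r (act (c r) s) * coact (c r) s * c s) := by
  have key : ∀ (a b : Rb) (k l : K), (a : G) * k = b * l → a = b ∧ k = l := by
    intro a b k l h
    have h' : (a, k) = (b, l) := (huniqb ((a : G) * k)).unique rfl h
    exact Prod.mk.inj h'
  have hact : ∀ (x : K) (r : R), actb x (bar r) = bar (act x r) ∧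
      coactb x (bar r) = (c (act x r))⁻¹ * coact x r * c r := by
    intro x r
    apply key
    rw [← hfacb, hbar, hbar, ← mul_assoc, hfac]
    push_cast
    group
  have hmul : ∀ r s : R, mulb (bar r) (bar s) = bar (mul r (act (c r) s)) ∧
      taub (bar r) (bar s)
        = (c (mul r (act (c r) s)))⁻¹ * tau r (act (c r) s) * coact (c r) s * c s := by
    intro r s
    apply key
    have h : (r : G) * c r * (s * c s)
        = mul r (act (c r) s) * tau r (act (c r) s) * coact (c r) s * c s := by
      rw [← hfac2, mul_assoc (r : G) (act (c r) s : G), ← hfac]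
      group
    rw [← hfac2b, hbar, hbar, hbar, h]
    push_cast
    group
  exact ⟨fun x r => by rw [(hact x r).1, hbar], fun x r => (hact x r).1,
    fun x r => (hact x r).2, fun r s => (hmul r s).1, fun r s => (hmul r s).2⟩
end

section
/- For any linear map A : V → V define T(A) := (dim V/|G|) Σ_{g∈G} Tr(π(g⁻¹) ∘ A) · π'(g), a linear endomorphism of V'. If π and π' are not isomorphic then T(A) = 0 for every A; and in the case (V',π') = (V,π), one has T(A) = A for every linear map A : V → V. -/
/-!
Fix a functional `f` on `V` and a vector `w` of `V'`, and average the rank-one map `x ↦ f x • w`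
over `G`: the map `S v = ∑ g, f (π g⁻¹ v) • π' g w` intertwines `π` and `π'`
(`rankOneAverage_intertwines`). Expanding the trace in a basis `b` of `V` gives
`∑ g, Tr (π g⁻¹ ∘ A) • π' g w = ∑ i, S_i (A (b i))`, where `S_i` is the average attached to the
coordinate functional `f = b.coord i` (`sum_trace_smul_apply`).

By Schur's lemma every `S_i` vanishes if the representations are not isomorphic. If they are equal,
then `S_i` is a scalar; its trace is `|G| * b.coord i w`, so
`(dim V / |G|) • S_i v = b.coord i w • v`, and summing over `i` with `v = A (b i)` yields `A w`.
-/

/-- The sum over `G` of the conjugates `π' g ∘ B ∘ π g⁻¹` of the rank-one map `B x = f x • w`.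
It is not divided by `|G|`. -/
noncomputable def rankOneAverage {G V V' : Type*} [Group G] [Fintype G]
    [AddCommGroup V] [Module ℂ V] [AddCommGroup V'] [Module ℂ V']
    (π : G →* (V →ₗ[ℂ] V)) (π' : G →* (V' →ₗ[ℂ] V')) (f : V →ₗ[ℂ] ℂ) (w : V') : V →ₗ[ℂ] V' :=
  ∑ g : G, (f ∘ₗ π g⁻¹).smulRight (π' g w)

lemma rankOneAverage_apply {G V V' : Type*} [Group G] [Fintype G]
    [AddCommGroup V] [Module ℂ V] [AddCommGroup V'] [Module ℂ V']
    (π : G →* (V →ₗ[ℂ] V)) (π' : G →* (V' →ₗ[ℂ] V')) (f : V →ₗ[ℂ] ℂ) (w : V') (v : V) :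
    rankOneAverage π π' f w v = ∑ g : G, f (π g⁻¹ v) • π' g w := by
  simp [rankOneAverage, LinearMap.sum_apply]

lemma rankOneAverage_intertwines {G V V' : Type*} [Group G] [Fintype G]
    [AddCommGroup V] [Module ℂ V] [AddCommGroup V'] [Module ℂ V']
    (π : G →* (V →ₗ[ℂ] V)) (π' : G →* (V' →ₗ[ℂ] V')) (f : V →ₗ[ℂ] ℂ) (w : V') (h : G) (v : V) :
    rankOneAverage π π' f w (π h v) = π' h (rankOneAverage π π' f w v) := by
  simp only [rankOneAverage_apply, map_sum, map_smul]
  symm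
  -- Reindex by `g ↦ h * g`.
  refine Fintype.sum_equiv (Equiv.mulLeft h) _ _ fun g => ?_
  simp only [Equiv.coe_mulLeft, ← Module.End.mul_apply, ← map_mul]
  congr 4
  group

lemma sum_trace_smul_apply {G V V' ι : Type*} [Group G] [Fintype G] [Fintype ι]
    [AddCommGroup V] [Module ℂ V] [AddCommGroup V'] [Module ℂ V']
    (π : G →* (V →ₗ[ℂ] V)) (π' : G →* (V' →ₗ[ℂ] V')) (b : Module.Basis ι ℂ V)
    (A : V →ₗ[ℂ] V) (w : V') :
    (∑ g : G, (LinearMap.trace ℂ V ((π g⁻¹).comp A)) • π' g) w =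
      ∑ i, rankOneAverage π π' (b.coord i) w (A (b i)) := by
  classical
  simp only [rankOneAverage_apply, LinearMap.sum_apply, LinearMap.smul_apply]
  rw [Finset.sum_comm]
  refine Finset.sum_congr rfl fun g _ => ?_
  rw [← Finset.sum_smul, LinearMap.trace_eq_matrix_trace ℂ b]
  simp [Matrix.trace, LinearMap.toMatrix_apply]

/-- Schur's lemma for non-isomorphic irreducible representations. -/
lemma intertwiner_eq_zero {G V V' : Type*} [Group G]
    [AddCommGroup V] [Module ℂ V] [AddCommGroup V'] [Module ℂ V']
    (π : G →* (V →ₗ[ℂ] V)) (π' : G →* (V' →ₗ[ℂ] V'))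
    (hπ : ∀ U : Submodule ℂ V, (∀ g : G, ∀ v ∈ U, π g v ∈ U) → U = ⊥ ∨ U = ⊤)
    (hπ' : ∀ U : Submodule ℂ V', (∀ g : G, ∀ v ∈ U, π' g v ∈ U) → U = ⊥ ∨ U = ⊤)
    (hne : ¬ ∃ e : V ≃ₗ[ℂ] V', ∀ (g : G) (v : V), e (π g v) = π' g (e v))
    (S : V →ₗ[ℂ] V') (hS : ∀ g v, S (π g v) = π' g (S v)) : S = 0 := by
  rcases hπ (LinearMap.ker S) (fun g v hv => by
    rw [LinearMap.mem_ker] at hv ⊢; rw [hS, hv, map_zero]) with hk | hk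
  · rcases hπ' (LinearMap.range S) (by
      rintro g _ ⟨v, rfl⟩; exact ⟨π g v, hS g v⟩) with hr | hr
    · exact LinearMap.range_eq_bot.mp hr
    · exact absurd ⟨LinearEquiv.ofBijective S
        ⟨LinearMap.ker_eq_bot.mp hk, LinearMap.range_eq_top.mp hr⟩, fun g v => hS g v⟩ hne
  · exact LinearMap.ker_eq_top.mp hk

/-- Schur's lemma for an endomorphism of an irreducible representation: it is a scalar, because
an eigenspace is a nonzero invariant subspace. -/
lemma intertwiner_eq_smul {G V : Type*} [Group G]
    [AddCommGroup V] [Module ℂ V] [FiniteDimensional ℂ V] [Nontrivial V]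
    (π : G →* (V →ₗ[ℂ] V))
    (hπ : ∀ U : Submodule ℂ V, (∀ g : G, ∀ v ∈ U, π g v ∈ U) → U = ⊥ ∨ U = ⊤)
    (S : V →ₗ[ℂ] V) (hS : ∀ g v, S (π g v) = π g (S v)) : ∃ c : ℂ, ∀ v, S v = c • v := by
  obtain ⟨c, hc⟩ := Module.End.exists_eigenvalue S
  refine ⟨c, fun v => ?_⟩
  rcases hπ (Module.End.eigenspace S c) (fun g v hv => by
    rw [Module.End.mem_eigenspace_iff] at hv ⊢; rw [hS, hv, map_smul]) with h | h
  · exact absurd h hc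
  · exact Module.End.mem_eigenspace_iff.mp (h ▸ Submodule.mem_top)

/-- Each conjugate of `x ↦ f x • w` has trace `f w`. -/
lemma trace_rankOneAverage {G V : Type*} [Group G] [Fintype G]
    [AddCommGroup V] [Module ℂ V] [FiniteDimensional ℂ V]
    (π : G →* (V →ₗ[ℂ] V)) (f : V →ₗ[ℂ] ℂ) (w : V) :
    LinearMap.trace ℂ V (rankOneAverage π π f w) = Fintype.card G * f w := by
  have h (g : G) : π g⁻¹ (π g w) = w := by
    rw [← Module.End.mul_apply, ← map_mul, inv_mul_cancel, map_one, Module.End.one_apply]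
  simp [rankOneAverage, LinearMap.trace_smulRight, h]

/-- In the irreducible case the scalar by which the average acts is determined by its trace. -/
lemma smul_rankOneAverage_apply {G V : Type*} [Group G] [Fintype G]
    [AddCommGroup V] [Module ℂ V] [FiniteDimensional ℂ V] [Nontrivial V]
    (π : G →* (V →ₗ[ℂ] V))
    (hπ : ∀ U : Submodule ℂ V, (∀ g : G, ∀ v ∈ U, π g v ∈ U) → U = ⊥ ∨ U = ⊤)
    (f : V →ₗ[ℂ] ℂ) (w v : V) :
    ((Module.finrank ℂ V : ℂ) / (Fintype.card G : ℂ)) • rankOneAverage π π f w v = f w • v := by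
  obtain ⟨c, hc⟩ := intertwiner_eq_smul π hπ _ (rankOneAverage_intertwines π π f w)
  have htr := trace_rankOneAverage π f w
  have hS : rankOneAverage π π f w = c • LinearMap.id := LinearMap.ext fun v => by simp [hc]
  rw [hS, map_smul, LinearMap.trace_id, smul_eq_mul] at htr
  have hG : (Fintype.card G : ℂ) ≠ 0 := Nat.cast_ne_zero.mpr Fintype.card_ne_zero
  rw [hc, smul_smul]
  congr 1
  field_simp
  linear_combination htr

/-- Let `G` be a finite group and `(V,π)`, `(V',π')` irreducible
finite-dimensional complex representations.  For a linear map `A : V → V` define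
`T(A) := (dim V/|G|) Σ_{g∈G} Tr(π(g⁻¹) ∘ A) · π'(g)`, a linear endomorphism of `V'`.
If `π` and `π'` are not isomorphic then `T(A) = 0` for every `A`; and in the case
`(V',π') = (V,π)` one has `T(A) = A` for every linear map `A : V → V`. -/
theorem statement13 {G : Type*} [Group G] [Fintype G]
    (V V' : Type*) [AddCommGroup V] [Module ℂ V] [FiniteDimensional ℂ V]
    [AddCommGroup V'] [Module ℂ V'] [FiniteDimensional ℂ V']
    (π : G →* (V →ₗ[ℂ] V)) (π' : G →* (V' →ₗ[ℂ] V'))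
    (hπ_nontrivial : Nontrivial V)
    (hπ_irr : ∀ U : Submodule ℂ V, (∀ g : G, ∀ v ∈ U, π g v ∈ U) → U = ⊥ ∨ U = ⊤)
    (hπ'_nontrivial : Nontrivial V')
    (hπ'_irr : ∀ U : Submodule ℂ V', (∀ g : G, ∀ v ∈ U, π' g v ∈ U) → U = ⊥ ∨ U = ⊤) :
    ((¬ ∃ e : V ≃ₗ[ℂ] V', ∀ (g : G) (v : V), e (π g v) = π' g (e v)) →
      ∀ A : V →ₗ[ℂ] V,
        (((Module.finrank ℂ V : ℂ) / (Fintype.card G : ℂ)) •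
          ∑ g : G, (LinearMap.trace ℂ V ((π g⁻¹).comp A)) • π' g) = 0) ∧
    (∀ A : V →ₗ[ℂ] V,
        (((Module.finrank ℂ V : ℂ) / (Fintype.card G : ℂ)) •
          ∑ g : G, (LinearMap.trace ℂ V ((π g⁻¹).comp A)) • π g) = A) := by
  have b := Module.finBasis ℂ V
  refine ⟨fun hne A => LinearMap.ext fun w => ?_, fun A => LinearMap.ext fun w => ?_⟩
  · rw [LinearMap.smul_apply, sum_trace_smul_apply π π' b]
    simp [intertwiner_eq_zero π π' hπ_irr hπ'_irr hne _ (rankOneAverage_intertwines π π' _ w)]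
  · rw [LinearMap.smul_apply, sum_trace_smul_apply π π b, Finset.smul_sum]
    simp only [smul_rankOneAverage_apply π hπ_irr, ← map_smul, ← map_sum, Module.Basis.coord_apply,
      b.sum_repr]
end

section
/- The multiplicity of V in W regarded as an A-module via i, namely dim_ℂ Hom_A(V, W), equals (dim B/(dim V · dim W)) · ∫(i(e)·f). Moreover, i(e)·f = 0 in B if and only if Hom_A(V, W) = 0. -/
/-!
The proof rests on the Wedderburn component picked out by a central idempotent. Let `V` be a
simple `A`-module and `e` its central idempotent. By the density theorem and Schur's lemma
`A → End_ℂ V` is surjective, and since `A` has zero Jacobson radical, `e * a` is determined by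
the action of `a` on `V`. Hence there is a linear section `σ : End_ℂ V → A` of the action with
`σ (ρ(a)) = e * a` (`exists_section`).

For a representation `W` of `A` and a basis `b` of `V`, the diagonal matrix units
`p_j = σ (b_j ⊗ b_j*)` sum to `e`. Evaluation at `b_j` identifies `Hom_A(V, W)` with the image
of the idempotent `p_j` on `W`, so each `p_j` has trace `dim Hom_A(V, W)` on `W`, and
`Tr_W(e) = dim V · dim Hom_A(V, W)` (`trace_idem`).

For `B`, the map `b ↦ f * b` factors through `End_ℂ W` via the section, so cyclicity of the trace
gives `Tr(L_{x f}) = Tr(T ↦ ρ(x) T) = dim W · Tr_W(x)` (`trace_mulLeft_mul`). Taking `x = i e` gives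
the multiplicity formula. The vanishing criterion follows because an idempotent of trace zero
is zero, and `i e * f` is determined by the action of `i e` on `W`.
-/

open Module

/-- Schur's lemma over `ℂ`. -/
lemma schur_scalar {A V : Type*} [Ring A] [Algebra ℂ A] [AddCommGroup V] [Module ℂ V]
    [Module A V] [IsScalarTower ℂ A V] [FiniteDimensional ℂ V] [IsSimpleModule A V]
    (T : V →ₗ[A] V) : ∃ c : ℂ, ∀ v, T v = c • v := by
  have : SMulCommClass A ℂ V := IsScalarTower.to_smulCommClass' (R := ℂ) (A := A) (M := V)
  have : Nontrivial V := IsSimpleModule.nontrivial A V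
  obtain ⟨c, hc⟩ := Module.End.exists_eigenvalue (T.restrictScalars ℂ : End ℂ V)
  obtain ⟨v, hv⟩ := hc.exists_hasEigenvector
  refine ⟨c, fun w => ?_⟩
  have h : T - c • LinearMap.id = 0 := by
    refine ((T - c • LinearMap.id).injective_or_eq_zero).resolve_left fun hinj => hv.2 ?_
    refine hinj ?_
    have := hv.apply_eq_smul
    simp only [LinearMap.restrictScalars_apply] at this
    simp [this]
  have := congrArg (fun g : V →ₗ[A] V => g w) h
  simpa [sub_eq_zero] using this

/-- Burnside's theorem: a complex algebra acts on a finite-dimensional simple module through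
all linear endomorphisms. -/
lemma lsmul_surjective {A V : Type*} [Ring A] [Algebra ℂ A] [AddCommGroup V] [Module ℂ V]
    [Module A V] [IsScalarTower ℂ A V] [FiniteDimensional ℂ V] [IsSimpleModule A V] :
    Function.Surjective (Algebra.lsmul ℂ ℂ V : A →ₐ[ℂ] End ℂ V) := by
  intro φ
  -- By Schur's lemma a `ℂ`-linear map is linear over `End_A V`, as density requires.
  let ψ : End (End A V) V :=
    { toFun := φ
      map_add' := φ.map_add
      map_smul' := fun T v => by
        obtain ⟨c, hc⟩ := schur_scalar T
        simp [hc] }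
  let b := Module.finBasis ℂ V
  classical
  obtain ⟨a, ha⟩ := jacobson_density ψ (Finset.univ.image b)
  refine ⟨a, b.ext fun j => ?_⟩
  exact (ha (b j) (by simp)).symm

/-- If `a` kills `V` then `e * a` kills every simple module, hence lies in the Jacobson radical,
which is zero. The assumption on simple modules only ranges over those in `Type`, so simple
quotients of `A` are first moved there; they are small because they are finite-dimensional over `ℂ`. -/
lemma idem_mul_eq_zero {A : Type*} [Ring A] [Algebra ℂ A] [FiniteDimensional ℂ A]
    [IsSemisimpleRing A] (V : Type*) [AddCommGroup V] [Module A V]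
    (e : A)
    (he_zero : ∀ (V' : Type) [AddCommGroup V'] [Module A V'],
      IsSimpleModule A V' → IsEmpty (V ≃ₗ[A] V') → ∀ v' : V', e • v' = 0)
    (a : A) (ha : ∀ v : V, a • v = 0) : e * a = 0 := by
  have : Small.{0} A := small_of_injective (Module.finBasis ℂ A).equivFun.injective
  have key : e * a ∈ Ring.jacobson A := by
    refine (Submodule.mem_sInf).2 fun m hm => ?_
    have : IsSimpleModule A (A ⧸ m) := isSimpleModule_iff_isCoatom.2 hm
    have : Small.{0} (A ⧸ m) := small_of_surjective (Submodule.mkQ_surjective m)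
    let g : Shrink.{0} (A ⧸ m) ≃ₗ[A] (A ⧸ m) := Shrink.linearEquiv A (A ⧸ m)
    have : IsSimpleModule A (Shrink.{0} (A ⧸ m)) := IsSimpleModule.congr g
    have h0 : ∀ s : Shrink.{0} (A ⧸ m), (e * a) • s = 0 := by
      intro s
      rw [mul_smul]
      by_cases h : IsEmpty (V ≃ₗ[A] Shrink.{0} (A ⧸ m))
      · exact he_zero _ inferInstance h _
      · obtain ⟨k⟩ := not_isEmpty_iff.1 h
        have : a • s = 0 := by
          rw [← k.apply_symm_apply s, ← map_smul, ha, map_zero]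
        rw [this, smul_zero]
    have h1 := congrArg g (h0 (g.symm (Submodule.Quotient.mk 1)))
    rw [map_smul, g.apply_symm_apply, map_zero, ← Submodule.Quotient.mk_smul, smul_eq_mul,
      mul_one] at h1
    exact (Submodule.Quotient.mk_eq_zero m).1 h1
  rw [IsSemisimpleRing.jacobson_eq_bot] at key
  exact (Submodule.mem_bot A).1 key

/-- The inverse of the isomorphism `e * A ≃ End_ℂ V`, as a linear section of the action. -/
lemma exists_section {A : Type*} [Ring A] [Algebra ℂ A] [FiniteDimensional ℂ A]
    [IsSemisimpleRing A] (V : Type*) [AddCommGroup V] [Module ℂ V] [Module A V]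
    [IsScalarTower ℂ A V] [FiniteDimensional ℂ V] [IsSimpleModule A V]
    (e : A) (heV : ∀ v : V, e • v = v)
    (he_zero : ∀ (V' : Type) [AddCommGroup V'] [Module A V'],
      IsSimpleModule A V' → IsEmpty (V ≃ₗ[A] V') → ∀ v' : V', e • v' = 0) :
    ∃ σ : End ℂ V →ₗ[ℂ] A, (∀ T v, σ T • v = T v) ∧
      ∀ T a, (∀ v : V, a • v = T v) → σ T = e * a := by
  obtain ⟨s, hs⟩ := LinearMap.exists_rightInverse_of_surjective
    (Algebra.lsmul ℂ ℂ V : A →ₐ[ℂ] End ℂ V).toLinearMap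
    (LinearMap.range_eq_top.2 lsmul_surjective)
  have hs' : ∀ T v, s T • v = T v := fun T v =>
    congrArg (fun g : End ℂ V →ₗ[ℂ] End ℂ V => g T v) hs
  refine ⟨LinearMap.mulLeft ℂ e ∘ₗ s, fun T v => ?_, fun T a h => ?_⟩
  · simp [mul_smul, heV, hs']
  · have := idem_mul_eq_zero V e he_zero (s T - a) fun v => by rw [sub_smul, hs', h, sub_self]
    rw [mul_sub, sub_eq_zero] at this
    simpa using this

/-- The trace of the central idempotent of `V` on a representation `ρ` is the dimension of the
`V`-isotypic component. -/
lemma trace_idem {A : Type*} [Ring A] [Algebra ℂ A] [FiniteDimensional ℂ A]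
    [IsSemisimpleRing A] (V : Type*) [AddCommGroup V] [Module ℂ V] [Module A V]
    [IsScalarTower ℂ A V] [FiniteDimensional ℂ V] [IsSimpleModule A V]
    (e : A) (he_central : ∀ a : A, e * a = a * e) (heV : ∀ v : V, e • v = v)
    (he_zero : ∀ (V' : Type) [AddCommGroup V'] [Module A V'],
      IsSimpleModule A V' → IsEmpty (V ≃ₗ[A] V') → ∀ v' : V', e • v' = 0)
    (W : Type*) [AddCommGroup W] [Module ℂ W] [FiniteDimensional ℂ W]
    (ρ : A →ₐ[ℂ] End ℂ W) (H : Submodule ℂ (V →ₗ[ℂ] W))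
    (hH : ∀ φ : V →ₗ[ℂ] W, φ ∈ H ↔ ∀ (a : A) (v : V), φ (a • v) = ρ a (φ v)) :
    LinearMap.trace ℂ W (ρ e) = (finrank ℂ V : ℂ) * (finrank ℂ H : ℂ) := by
  obtain ⟨σ, hσ, hσ'⟩ := exists_section V e heV he_zero
  have hmul : ∀ (a : A) (S T : End ℂ V), (∀ v, S v = a • T v) → a * σ T = σ S := by
    intro a S T h
    have hT : σ T = e * σ T := hσ' T (σ T) (hσ T)
    rw [hσ' S (a * σ T) fun v => by rw [mul_smul, hσ, h], ← mul_assoc, he_central a, mul_assoc,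
      ← hT]
  let b := Module.finBasis ℂ V
  let E : Fin (finrank ℂ V) → V →ₗ[ℂ] A := fun j => σ ∘ₗ LinearMap.smulRightₗ (b.coord j)
  have hE : ∀ j v x, E j v • x = b.coord j x • v := fun j v x => by simp [E, hσ]
  have haE : ∀ j a v, a * E j v = E j (a • v) := fun j a v =>
    hmul a _ _ fun x => by
      have : SMulCommClass A ℂ V := IsScalarTower.to_smulCommClass' (R := ℂ) (A := A) (M := V)
      simp [smul_comm a]
  have hsum : ∑ j, E j (b j) = e := by
    have h1 : ∑ j, E j (b j) = σ 1 := by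
      simp only [E, LinearMap.comp_apply, ← map_sum]
      congr 1
      ext x
      simp [LinearMap.sum_apply, b.sum_repr]
    rw [h1, hσ' 1 1 (by simp), mul_one]
  have htr : ∀ j, LinearMap.trace ℂ W (ρ (E j (b j))) = finrank ℂ H := by
    intro j
    have hjj : ∀ v, E j v • b j = v := fun v => by simp [hE]
    have hid : IsIdempotentElem (ρ (E j (b j))) := by
      rw [IsIdempotentElem, ← map_mul, haE, hjj]
    rw [(LinearMap.IsIdempotentElem.isProj_range _ hid).trace]
    -- Evaluation at `b j` maps `Hom_A(V, W)` isomorphically onto the image of `p_j`.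
    let ev : H →ₗ[ℂ] W := LinearMap.applyₗ (b j) ∘ₗ H.subtype
    have hinj : Function.Injective ev := by
      intro φ ψ h
      ext v
      have hφ := (hH φ).1 φ.2 (E j v) (b j)
      have hψ := (hH ψ).1 ψ.2 (E j v) (b j)
      rw [hjj] at hφ hψ
      rw [hφ, hψ]
      exact congrArg _ h
    have hrange : LinearMap.range ev = LinearMap.range (ρ (E j (b j))) := by
      apply le_antisymm
      · rintro _ ⟨φ, rfl⟩
        have hφ := (hH φ).1 φ.2 (E j (b j)) (b j)
        rw [hjj] at hφ
        exact ⟨_, hφ.symm⟩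
      · rintro _ ⟨w, rfl⟩
        refine ⟨⟨LinearMap.applyₗ w ∘ₗ ρ.toLinearMap ∘ₗ E j, (hH _).2 fun a v => ?_⟩, rfl⟩
        simp [← haE]
    rw [← hrange, LinearMap.finrank_range_of_inj hinj]
  rw [← hsum, map_sum, map_sum, Finset.sum_congr rfl fun j _ => htr j]
  simp

lemma trace_mulLeft_end {W : Type*} [AddCommGroup W] [Module ℂ W] [FiniteDimensional ℂ W]
    (x : End ℂ W) :
    LinearMap.trace ℂ (End ℂ W) (LinearMap.mulLeft ℂ x) =
      (finrank ℂ W : ℂ) * LinearMap.trace ℂ W x := by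
  have h : LinearMap.mulLeft ℂ x =
      (dualTensorHomEquiv ℂ W W).conj (TensorProduct.map LinearMap.id x) := by
    rw [LinearEquiv.conj_apply, LinearEquiv.eq_comp_toLinearMap_symm]
    ext ξ w v
    simp
  rw [h, LinearMap.trace_conj', LinearMap.trace_tensorProduct', LinearMap.trace_id,
    Subspace.dual_finrank_eq]

/-- The regular trace on the component of `W` is `dim W` times the trace on `W`. -/
lemma trace_mulLeft_mul {B : Type*} [Ring B] [Algebra ℂ B] [FiniteDimensional ℂ B]
    [IsSemisimpleRing B] (W : Type*) [AddCommGroup W] [Module ℂ W] [Module B W]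
    [IsScalarTower ℂ B W] [FiniteDimensional ℂ W] [IsSimpleModule B W]
    (f : B) (hfW : ∀ w : W, f • w = w)
    (hf_zero : ∀ (W' : Type) [AddCommGroup W'] [Module B W'],
      IsSimpleModule B W' → IsEmpty (W ≃ₗ[B] W') → ∀ w' : W', f • w' = 0) (x : B) :
    LinearMap.trace ℂ B (LinearMap.mulLeft ℂ (x * f)) =
      (finrank ℂ W : ℂ) * LinearMap.trace ℂ W (Algebra.lsmul ℂ ℂ W x) := by
  obtain ⟨σ, hσ, hσ'⟩ := exists_section W f hfW hf_zero
  let r : B →ₗ[ℂ] End ℂ W := (Algebra.lsmul ℂ ℂ W : B →ₐ[ℂ] End ℂ W).toLinearMap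
  have h1 : LinearMap.mulLeft ℂ (x * f) = (LinearMap.mulLeft ℂ x ∘ₗ σ) ∘ₗ r := by
    ext b
    simp [hσ' (r b) b (fun v => rfl)]
  have h2 : r ∘ₗ (LinearMap.mulLeft ℂ x ∘ₗ σ) = LinearMap.mulLeft ℂ (r x) := by
    ext T w
    simp [r, hσ]
  rw [h1, LinearMap.trace_comp_comm', h2, trace_mulLeft_end]
  rfl

/-- Let `A`, `B` be finite-dimensional semisimple `ℂ`-algebras,
`i : A → B` an injective algebra map, `∫ b := Tr(L_b)/dim B` the unique symmetric special
Frobenius form on `B` with `∫1 = 1`, `V` a simple finite-dimensional `A`-module and `W` a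
simple finite-dimensional `B`-module.  Let `e ∈ A` and `f ∈ B` be the central idempotents
acting as the identity on `V` resp. `W` and as zero on the other simples.  Then the
multiplicity of `V` in `W` regarded as an `A`-module via `i`, namely
`dim Hom_A(V,W)`, equals `(dim B/(dim V·dim W))·∫(i(e)·f)`;  moreover `i(e)·f = 0` in `B`
if and only if `Hom_A(V,W) = 0`. -/
theorem statement15 {A B : Type*}
    [Ring A] [Algebra ℂ A] [FiniteDimensional ℂ A] [IsSemisimpleRing A]
    [Ring B] [Algebra ℂ B] [FiniteDimensional ℂ B] [IsSemisimpleRing B]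
    (i : A →ₐ[ℂ] B) (hi : Function.Injective i)
    (V : Type*) [AddCommGroup V] [Module ℂ V] [Module A V] [IsScalarTower ℂ A V]
    [FiniteDimensional ℂ V] [IsSimpleModule A V]
    (W : Type*) [AddCommGroup W] [Module ℂ W] [Module B W] [IsScalarTower ℂ B W]
    [FiniteDimensional ℂ W] [IsSimpleModule B W]
    (e : A) (he_central : ∀ a : A, e * a = a * e) (he_idem : e * e = e)
    (heV : ∀ v : V, e • v = v)
    (he_zero : ∀ (V' : Type) [AddCommGroup V'] [Module A V'],
      IsSimpleModule A V' → IsEmpty (V ≃ₗ[A] V') → ∀ v' : V', e • v' = 0)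
    (f : B) (hf_central : ∀ b : B, f * b = b * f) (hf_idem : f * f = f)
    (hfW : ∀ w : W, f • w = w)
    (hf_zero : ∀ (W' : Type) [AddCommGroup W'] [Module B W'],
      IsSimpleModule B W' → IsEmpty (W ≃ₗ[B] W') → ∀ w' : W', f • w' = 0)
    (H : Submodule ℂ (V →ₗ[ℂ] W))
    (hH : ∀ φ : V →ₗ[ℂ] W, φ ∈ H ↔ ∀ (a : A) (v : V), φ (a • v) = i a • φ v) :
    ((Module.finrank ℂ H : ℂ) =
      ((Module.finrank ℂ B : ℂ) /
          ((Module.finrank ℂ V : ℂ) * (Module.finrank ℂ W : ℂ))) *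
        (LinearMap.trace ℂ B (LinearMap.mulLeft ℂ (i e * f)) /
          (Module.finrank ℂ B : ℂ))) ∧
    (i e * f = 0 ↔ H = ⊥) := by
  let ρ : A →ₐ[ℂ] End ℂ W := (Algebra.lsmul ℂ ℂ W : B →ₐ[ℂ] End ℂ W).comp i
  have hV := trace_idem V e he_central heV he_zero W ρ H hH
  have hB : LinearMap.trace ℂ B (LinearMap.mulLeft ℂ (i e * f)) =
      (finrank ℂ W : ℂ) * ((finrank ℂ V : ℂ) * (finrank ℂ H : ℂ)) := by
    rw [trace_mulLeft_mul W f hfW hf_zero, ← hV]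
    rfl
  have : Nontrivial V := IsSimpleModule.nontrivial A V
  have : Nontrivial W := IsSimpleModule.nontrivial B W
  have : Nontrivial B := by
    by_contra h
    rw [not_nontrivial_iff_subsingleton] at h
    obtain ⟨w, hw⟩ := exists_ne (0 : W)
    exact hw (by rw [← one_smul B w, Subsingleton.elim (1 : B) 0, zero_smul])
  have hdV : (finrank ℂ V : ℂ) ≠ 0 := Nat.cast_ne_zero.2 finrank_pos.ne'
  have hdW : (finrank ℂ W : ℂ) ≠ 0 := Nat.cast_ne_zero.2 finrank_pos.ne'
  have hdB : (finrank ℂ B : ℂ) ≠ 0 := Nat.cast_ne_zero.2 finrank_pos.ne'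
  refine ⟨?_, fun h => ?_, fun h => ?_⟩
  · rw [hB]
    field_simp
  · have h0 : LinearMap.trace ℂ B (LinearMap.mulLeft ℂ (i e * f)) = 0 := by
      simp [h]
    rw [hB] at h0
    have : finrank ℂ H = 0 := by simpa [hdV, hdW] using h0
    exact Submodule.finrank_eq_zero.1 this
  · have hid : IsIdempotentElem (ρ e) := by rw [IsIdempotentElem, ← map_mul, he_idem]
    have h0 : ρ e = 0 := LinearMap.IsIdempotentElem.eq_zero_of_trace_eq_zero hid
      (by rw [hV, h]; simp)
    rw [← hf_central]
    exact idem_mul_eq_zero W f hf_zero (i e) fun w =>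
      congrArg (fun g : End ℂ W => g w) h0
end

section
/- The linear map ι : Ξ(R,K) → D(G) defined by ι(a)(g,h) = a(r_g, h) if h ∈ K and ι(a)(g,h) = 0 otherwise — where g = r_g·k_g is the unique factorisation with r_g ∈ R, k_g ∈ K — is an injective unital algebra homomorphism; on basis elements it is given by ι(δ_r ⊗ x) = Σ_{y∈K} δ_{ry} ⊗ x. -/
/-!
The map `ι` pulls a function on `R × K` back along `(g, h) ↦ (r_g, h)` and extends it by zero off
`h ∈ K`. Injectivity holds because `r_r = r` for `r ∈ R`. For multiplicativity, the sums over `G` in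
the product of `D(G)` collapse to sums over `K`, since `ι a` is supported on `G × K`; the two
products then agree because `r_{h⁻¹gh} = h⁻¹ ▷ r_g` for `h ∈ K`: indeed
`h⁻¹ g h = (h⁻¹ r_g) k_g h = (h⁻¹ ▷ r_g) · (h⁻¹ ◁ r_g) k_g h`. The formula on basis elements says
that `r_g = r` exactly when `g = r y` for a (unique) `y ∈ K`.
-/

open scoped Classical

/-- The `Fintype` instance on `K` is arbitrary, so the lemma applies whichever instance a sum over
`K` carries. -/
lemma sum_eq_sum_subgroup_of_support {G : Type} [Group G] [Fintype G] (K : Subgroup G) [Fintype K]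
    (f : G → ℂ) (hf : ∀ g, g ∉ K → f g = 0) : ∑ g : G, f g = ∑ x : K, f x := by
  rw [← Finset.sum_filter_of_ne (p := fun g => g ∈ K)
    (fun g _ hg => by by_contra h; exact hg (hf g h))]
  exact Finset.sum_subtype _ (by simp) f

/-- Let `G` be a finite group, `K ⊆ G` a subgroup and `R` a transversal
of `G/K` containing `e`, with `▷` defined by the unique factorisation `x r = (x▷r)(x◁r)`.
Realise `Ξ(R,K)` as functions `R × K → ℂ` with product
`(a·b)(r,z) = Σ_{xy=z} a(r,x)·b(x⁻¹▷r, y)`, and `D(G)` as functions `G × G → ℂ` with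
product `(a·b)(g,x) = Σ_{hk=x} a(g,h)·b(h⁻¹gh, k)`, both with the indicated units.  Then
the linear map `ι : Ξ(R,K) → D(G)` defined by `ι(a)(g,h) = a(r_g, h)` if `h ∈ K` and `0`
otherwise (where `g = r_g k_g` is the unique factorisation) is an injective unital algebra
homomorphism; on basis elements it is given by `ι(δ_r ⊗ x) = Σ_{y∈K} δ_{ry} ⊗ x`. -/
theorem statement16 {G : Type} [Group G] [Fintype G] (K : Subgroup G) (R : Set G)
    (heR : (1 : G) ∈ R)
    (huniq : ∀ (r r' : R) (x x' : K), (r : G) * (x : G) = (r' : G) * (x' : G) → r = r' ∧ x = x')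
    (rpart : G → R) (kpart : G → K)
    (hpart : ∀ g : G, g = (rpart g : G) * (kpart g : G))
    (act : K → R → R) (coact : K → R → K)
    (hfac : ∀ (x : K) (r : R), (x : G) * (r : G) = (act x r : G) * (coact x r : G))
    (ι : (R × K → ℂ) → (G × G → ℂ))
    (hι : ∀ (a : R × K → ℂ) (g h : G),
      ι a (g, h) = if hh : h ∈ K then a (rpart g, ⟨h, hh⟩) else 0) :
    Function.Injective ι ∧
    (ι (fun p => if p.2 = (1 : K) then 1 else 0) = fun p => if p.2 = (1 : G) then 1 else 0) ∧
    (∀ a b : R × K → ℂ,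
      ι (fun p => ∑ x : K, ∑ y : K,
          if x * y = p.2 then a (p.1, x) * b (act x⁻¹ p.1, y) else 0)
        = fun p => ∑ h : G, ∑ k : G,
            if h * k = p.2 then ι a (p.1, h) * ι b (h⁻¹ * p.1 * h, k) else 0) ∧
    (∀ (r : R) (x : K),
      ι (fun p => if p = (r, x) then 1 else 0)
        = fun p => ∑ y : K,
            if p.1 = (r : G) * (y : G) ∧ p.2 = (x : G) then 1 else 0) := by
  have rpart_eq : ∀ (g : G) (r : R) (y : K), g = r * y → rpart g = r := fun g r y h =>
    (huniq _ _ _ _ ((hpart g).symm.trans h)).1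
  have rpart_conj : ∀ (g : G) (x : K), rpart ((x : G)⁻¹ * g * x) = act x⁻¹ (rpart g) := by
    intro g x
    refine rpart_eq _ _ (coact x⁻¹ (rpart g) * kpart g * x) ?_
    have h := hfac x⁻¹ (rpart g)
    push_cast at h ⊢
    rw [← mul_assoc, ← mul_assoc, ← h, mul_assoc (x : G)⁻¹ (rpart g : G), ← hpart g]
  have ι_mem : ∀ (a : R × K → ℂ) (g : G) (x : K), ι a (g, x) = a (rpart g, x) := by
    intro a g x
    rw [hι, dif_pos x.2]
  have ι_notMem : ∀ (a : R × K → ℂ) (g h : G), h ∉ K → ι a (g, h) = 0 := by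
    intro a g h hh
    rw [hι, dif_neg hh]
  refine ⟨?_, ?_, ?_, ?_⟩
  · intro a b hab
    ext ⟨r, x⟩
    have h := congrFun hab ((r : G), (x : G))
    rwa [ι_mem, ι_mem, rpart_eq r r 1 (by simp)] at h
  · ext ⟨g, h⟩
    by_cases hh : h ∈ K
    · lift h to K using hh
      simp [ι_mem]
    · have h1 : h ≠ 1 := fun e => hh (e ▸ K.one_mem)
      simp [ι_notMem _ _ _ hh, h1]
  · intro a b
    ext ⟨g, z⟩
    -- both sums on the right may be restricted to `K`, by the support of `ι a` and `ι b`
    have key : (∑ h : G, ∑ k : G,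
        if h * k = z then ι a (g, h) * ι b (h⁻¹ * g * h, k) else 0)
        = ∑ x : K, ∑ y : K,
          if (x : G) * y = z then a (rpart g, x) * b (act x⁻¹ (rpart g), y) else 0 := by
      rw [sum_eq_sum_subgroup_of_support K _ (fun h hh => by simp [ι_notMem _ _ _ hh])]
      refine Finset.sum_congr rfl fun x _ => ?_
      rw [sum_eq_sum_subgroup_of_support K _ (fun k hk => by simp [ι_notMem _ _ _ hk])]
      refine Finset.sum_congr rfl fun y _ => ?_
      rw [ι_mem, ι_mem, rpart_conj]
    refine Eq.trans ?_ key.symm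
    by_cases hz : z ∈ K
    · lift z to K using hz
      rw [ι_mem]
      refine Finset.sum_congr rfl fun x _ => Finset.sum_congr rfl fun y _ => ?_
      simp only [← Subgroup.coe_mul, Subtype.coe_inj]
    · rw [ι_notMem _ _ _ hz]
      refine (Finset.sum_eq_zero fun x _ => Finset.sum_eq_zero fun y _ => if_neg ?_).symm
      rintro rfl
      exact hz (x * y).2
  · intro r x
    ext ⟨g, h⟩
    by_cases hh : h ∈ K
    · lift h to K using hh
      rw [ι_mem]
      by_cases hx : h = x
      · by_cases hr : rpart g = r
        · have hy : ∀ y : K, g = r * y ↔ y = kpart g := by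
            intro y
            constructor
            · intro e
              exact (huniq _ _ _ _ (e.symm.trans (hpart g))).2
            · rintro rfl
              rw [← hr]
              exact hpart g
          simp [hx, hr, hy]
        · have hy : ∀ y : K, g ≠ r * y := fun y e => hr (rpart_eq g r y e)
          simp [hr, hy]
      · simp [hx]
    · have hx : h ≠ x := fun e => hh (e ▸ x.2)
      simp [ι_notMem _ _ _ hh, hx]
end

section
/- Each P_{(C,π)} is a central idempotent of D(G): P_{(C,π)}·P_{(C,π)} = P_{(C,π)} and P_{(C,π)}·a = a·P_{(C,π)} for every a ∈ D(G). Moreover, given two such data (C, c₀, q, π) and (C', c₀', q', π'), one has P_{(C,π)}·P_{(C',π')} = 0 whenever C ≠ C', and also whenever C = C' (with c₀ = c₀' and q = q') but π and π' are non-isomorphic representations of G^{c₀}. -/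
/-!
Write `F = F_π : G → ℂ` for the function `z ↦ (dim π / |Z|) χ_π(z⁻¹)` on the centraliser `Z`,
extended by zero. Then `P(g, x) = F(q_g⁻¹ x q_g)` for `g ∈ C`, and `P(g, x) ≠ 0` forces `x` to
commute with `g`.

* In a product `P · b` only the terms with `h` commuting with `g` survive, so
  `(P · b)(g, x) = ∑ h, P(g, h) b(g, h⁻¹ x)` (`Dmul_Pproj`). Products over distinct, hence
  disjoint, classes therefore vanish, and over a common class the substitution
  `h ↦ q_g h q_g⁻¹` turns the product into the convolution `F_π * F_σ` on `Z`
  (`Dmul_Pproj_Pproj`).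
* By Schur's lemma `∑ h, χ_π(h⁻¹) σ(h)` is a scalar, whose trace is known from the orthogonality
  of characters. This computes the convolution: `F_π * F_π = F_π` (`Fext_conv_self`), and
  `F_π * F_σ = 0` when `π` and `σ` are not isomorphic (`Fext_conv_of_not_iso`).
* Since `χ_π` is a class function, `P` is invariant under simultaneous conjugation
  (`Pproj_conj`), and this is what centrality of `P` amounts to.
-/

open scoped Classical

/-- The product of the Drinfeld double `D(G)` realised on functions `G × G → ℂ`:
`(a·b)(g,x) = Σ_{hk=x} a(g,h)·b(h⁻¹gh, k)`. -/
noncomputable def Dmul {G : Type} [Group G] [Fintype G] (a b : G × G → ℂ) : G × G → ℂ :=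
  fun p => ∑ h : G, ∑ k : G,
    if h * k = p.2 then a (p.1, h) * b (h⁻¹ * p.1 * h, k) else 0

/-- The element `P_{(C,π)} ∈ D(G)`:
`P_{(C,π)}(g,x) = (dim π/|G^{c₀}|)·χ_π((q_g⁻¹ x q_g)⁻¹)` if `g ∈ C` and
`q_g⁻¹ x q_g ∈ G^{c₀}`, and `0` otherwise. -/
noncomputable def Pproj {G : Type} [Group G] [Fintype G] (C : Set G) (q : G → G)
    (Z : Subgroup G) {W : Type} [AddCommGroup W] [Module ℂ W]
    (π : Z →* (W →ₗ[ℂ] W)) : G × G → ℂ :=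
  fun p =>
    if h : p.1 ∈ C ∧ (q p.1)⁻¹ * p.2 * q p.1 ∈ Z then
      ((Module.finrank ℂ W : ℂ) / (Nat.card Z : ℂ)) *
        LinearMap.trace ℂ W (π ((⟨(q p.1)⁻¹ * p.2 * q p.1, h.2⟩ : Z)⁻¹))
    else 0

theorem isIrreducible_of_forall {H W : Type} [Group H] [AddCommGroup W] [Module ℂ W]
    [Nontrivial W] (π : Representation ℂ H W)
    (hirr : ∀ U : Submodule ℂ W, (∀ n : H, ∀ w ∈ U, π n w ∈ U) → U = ⊥ ∨ U = ⊤) :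
    π.IsIrreducible where
  exists_pair_ne := by
    refine ⟨⊥, ⊤, fun h => ?_⟩
    have h' := congrArg Subrepresentation.toSubmodule h
    exact bot_ne_top (α := Submodule ℂ W) h'
  eq_bot_or_eq_top U := by
    rcases hirr U.toSubmodule (fun n w hw => U.apply_mem_toSubmodule n hw) with h | h
    · exact Or.inl (Subrepresentation.toSubmodule_injective h)
    · exact Or.inr (Subrepresentation.toSubmodule_injective h)

/-- Schur's lemma applied to the endomorphism `∑ h, f h • σ h`, for `f` a class function; the
scalar by which it acts is identified by taking traces. -/
theorem finrank_mul_sum_class_function {H W : Type} [Group H] [Fintype H] [AddCommGroup W]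
    [Module ℂ W] [FiniteDimensional ℂ W] (σ : Representation ℂ H W) [σ.IsIrreducible]
    (f : H → ℂ) (hf : ∀ g h, f (g * h * g⁻¹) = f h) (y : H) :
    (Module.finrank ℂ W : ℂ) * ∑ h, f h * σ.character (y * h) =
      (∑ h, f h * σ.character h) * σ.character y := by
  let T : W →ₗ[ℂ] W := ∑ h, f h • σ h
  have hT : ∀ g w, T (σ g w) = σ g (T w) := by
    intro g w
    simp only [T, LinearMap.sum_apply, LinearMap.smul_apply, map_sum, map_smul]
    rw [← (MulAut.conj g).toEquiv.sum_comp]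
    refine Finset.sum_congr rfl fun h _ => ?_
    simp only [MulEquiv.toEquiv_eq_coe, MulEquiv.coe_toEquiv, MulAut.conj_apply, hf]
    rw [← Module.End.mul_apply, ← Module.End.mul_apply, ← map_mul, ← map_mul]
    simp
  obtain ⟨c, hc⟩ :=
    (Representation.IsIrreducible.algebraMap_intertwiningMap_bijective_of_isAlgClosed
      (ρ := σ)).2 (T.intertwiningMap_of_isIntertwiningMap σ σ hT)
  have hTc : T = c • LinearMap.id := by
    have := congrArg Representation.IntertwiningMap.toLinearMap hc
    exact this.symm
  have h1 : ∑ h, f h * σ.character h = c * Module.finrank ℂ W := by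
    have := congrArg (LinearMap.trace ℂ W) hTc
    simpa [T, Representation.character] using this
  have h2 : ∑ h, f h * σ.character (y * h) = c * σ.character y := by
    have := congrArg (fun S => LinearMap.trace ℂ W (σ y * S)) hTc
    simp only [T, Finset.mul_sum, map_sum, mul_smul_comm, map_smul, smul_eq_mul,
      ← map_mul] at this
    simpa only [Representation.character, ← Module.End.one_eq_id, mul_one] using this
  rw [h1, h2]
  ring

section Fext

variable {G : Type} [Group G] (Z : Subgroup G)
  {W : Type} [AddCommGroup W] [Module ℂ W] (π : Z →* (W →ₗ[ℂ] W))
  {V : Type} [AddCommGroup V] [Module ℂ V] (σ : Z →* (V →ₗ[ℂ] V))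

/-- The function `z ↦ (dim π / |Z|) χ_π(z⁻¹)` on `Z`, extended by zero to `G`; for irreducible `π`
it is the central idempotent of the group algebra of `Z` attached to `π`. -/
noncomputable def Fext (z : G) : ℂ :=
  if h : z ∈ Z then
    ((Module.finrank ℂ W : ℂ) / (Nat.card Z : ℂ)) *
      LinearMap.trace ℂ W (π ((⟨z, h⟩ : Z)⁻¹))
  else 0

theorem Fext_coe (z : Z) : Fext Z π z =
    ((Module.finrank ℂ W : ℂ) / (Nat.card Z : ℂ)) * Representation.character π z⁻¹ := by
  simp [Fext, Representation.character]

theorem Fext_of_notMem {z : G} (hz : z ∉ Z) : Fext Z π z = 0 := by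
  simp [Fext, hz]

theorem Fext_conj (n : G) (hn : n ∈ Z) (z : G) : Fext Z π (n * z * n⁻¹) = Fext Z π z := by
  by_cases hz : z ∈ Z
  · lift n to Z using hn
    lift z to Z using hz
    have h : ((n : G) * z * (n : G)⁻¹) = ((n * z * n⁻¹ : Z) : G) := by simp
    rw [h, Fext_coe, Fext_coe, show (n * z * n⁻¹)⁻¹ = n * z⁻¹ * n⁻¹ by group,
      Representation.char_conj]
  · rw [Fext_of_notMem Z π hz, Fext_of_notMem]
    rwa [Subgroup.mul_mem_cancel_right Z (Z.inv_mem hn), Subgroup.mul_mem_cancel_left Z hn]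

/-- For irreducible `σ`, the convolution `F_π * F_σ` is a multiple of `F_σ`; up to the ratio of the
dimensions, the factor is the inner product of the two characters. -/
theorem Fext_conv [Fintype G] [FiniteDimensional ℂ V] [hσ : Representation.IsIrreducible σ]
    (x : G) :
    ∑ h : G, Fext Z π h * Fext Z σ (h⁻¹ * x) =
      (Module.finrank ℂ W : ℂ) / (Module.finrank ℂ V : ℂ) *
      ((Nat.card Z : ℂ)⁻¹ *
        ∑ h : Z, Representation.character σ h * Representation.character π h⁻¹) *
      Fext Z σ x := by
  have hsum : ∑ h : G, Fext Z π h * Fext Z σ (h⁻¹ * x) =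
      ∑ h : Z, Fext Z π h * Fext Z σ ((h : G)⁻¹ * x) := by
    have hf : ∀ h : G, h ∉ Finset.univ.filter (· ∈ Z) →
        Fext Z π h * Fext Z σ (h⁻¹ * x) = 0 := by
      intro h hh
      rw [Fext_of_notMem Z π (by simpa using hh), zero_mul]
    rw [← Finset.sum_subset (Finset.subset_univ (Finset.univ.filter (· ∈ Z)))
      fun h _ hh => hf h hh]
    exact Finset.sum_subtype _ (by simp) _
  rw [hsum]
  by_cases hx : x ∈ Z
  · lift x to Z using hx
    have hV : (Module.finrank ℂ V : ℂ) ≠ 0 := by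
      have : Nontrivial V := by
        by_contra hV
        rw [not_nontrivial_iff_subsingleton] at hV
        obtain ⟨a, b, hab⟩ := hσ.exists_pair_ne
        exact hab (Subrepresentation.toSubmodule_injective (Subsingleton.elim _ _))
      exact_mod_cast Module.finrank_pos.ne'
    have key := finrank_mul_sum_class_function (W := V) σ
      (fun h => Representation.character π h⁻¹)
      (fun g h => by
        rw [show (g * h * g⁻¹)⁻¹ = g * h⁻¹ * g⁻¹ by group, Representation.char_conj]) x⁻¹
    have hterm : ∀ h : Z, Fext Z π h * Fext Z σ ((h : G)⁻¹ * x) =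
        ((Module.finrank ℂ W : ℂ) / (Nat.card Z : ℂ)) *
        ((Module.finrank ℂ V : ℂ) / (Nat.card Z : ℂ)) *
        (Representation.character π h⁻¹ * Representation.character σ (x⁻¹ * h)) := by
      intro h
      have h' : (h : G)⁻¹ * x = ((h⁻¹ * x : Z) : G) := by simp
      rw [h', Fext_coe, Fext_coe, show (h⁻¹ * x)⁻¹ = x⁻¹ * h by group]
      ring
    rw [Finset.sum_congr rfl fun h _ => hterm h, ← Finset.mul_sum, Fext_coe]
    simp_rw [mul_comm (Representation.character σ _)]
    have e := eq_div_of_mul_eq hV ((mul_comm _ _).trans key)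
    rw [e]
    field_simp
  · rw [Fext_of_notMem Z σ hx, mul_zero]
    refine Finset.sum_eq_zero fun h _ => ?_
    rw [Fext_of_notMem Z σ, mul_zero]
    rwa [Subgroup.mul_mem_cancel_left Z (Z.inv_mem h.2)]

theorem Fext_conv_self [Fintype G] [FiniteDimensional ℂ W] [Nontrivial W]
    [Representation.IsIrreducible π] (x : G) :
    ∑ h : G, Fext Z π h * Fext Z π (h⁻¹ * x) = Fext Z π x := by
  have : Invertible (Nat.card Z : ℂ) := invertibleOfNonzero (by exact_mod_cast Nat.card_pos.ne')
  have hW : (Module.finrank ℂ W : ℂ) ≠ 0 := by exact_mod_cast Module.finrank_pos.ne'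
  rw [Fext_conv, Representation.char_orthonormal, if_pos ⟨Representation.Equiv.refl π⟩,
    div_self hW, one_mul, one_mul]

theorem Fext_conv_of_not_iso [Fintype G] [FiniteDimensional ℂ W] [FiniteDimensional ℂ V]
    [Representation.IsIrreducible π] [Representation.IsIrreducible σ]
    (hne : ¬ ∃ e : W ≃ₗ[ℂ] V, ∀ (n : Z) (w : W), e (π n w) = σ n (e w)) (x : G) :
    ∑ h : G, Fext Z π h * Fext Z σ (h⁻¹ * x) = 0 := by
  have : Invertible (Nat.card Z : ℂ) := invertibleOfNonzero (by exact_mod_cast Nat.card_pos.ne')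
  rw [Fext_conv, Representation.char_orthonormal, if_neg, mul_zero, zero_mul]
  rintro ⟨e⟩
  exact hne ⟨e.toLinearEquiv, fun n w => LinearMap.congr_fun (e.isIntertwining' n) w⟩

end Fext

section Pproj

variable {G : Type} [Group G] [Fintype G]

theorem Dmul_apply (a b : G × G → ℂ) (g x : G) :
    Dmul a b (g, x) = ∑ h : G, a (g, h) * b (h⁻¹ * g * h, h⁻¹ * x) := by
  refine Finset.sum_congr rfl fun h _ => ?_
  simp [← eq_inv_mul_iff_mul_eq]

variable (C : Set G) (c₀ : G) (Z : Subgroup G) (q : G → G)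
  {W : Type} [AddCommGroup W] [Module ℂ W] (π : Z →* (W →ₗ[ℂ] W))
  {V : Type} [AddCommGroup V] [Module ℂ V] (σ : Z →* (V →ₗ[ℂ] V))

theorem Pproj_of_mem {g : G} (hg : g ∈ C) (x : G) :
    Pproj C q Z π (g, x) = Fext Z π ((q g)⁻¹ * x * q g) := by
  simp [Pproj, Fext, hg]

theorem Pproj_of_notMem {g : G} (hg : g ∉ C) (x : G) : Pproj C q Z π (g, x) = 0 := by
  simp [Pproj, hg]

/-- The function `P(g, ·)` is supported on the centraliser of `g`. -/
theorem Pproj_support (hZ : ∀ n, n ∈ Z ↔ n * c₀ = c₀ * n)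
    (hq : ∀ c ∈ C, q c * c₀ * (q c)⁻¹ = c)
    {g x : G} (h : Pproj C q Z π (g, x) ≠ 0) : x⁻¹ * g * x = g := by
  by_cases hg : g ∈ C
  · rw [Pproj_of_mem C Z q π hg] at h
    have hm : (q g)⁻¹ * x * q g ∈ Z := by
      by_contra hm
      exact h (Fext_of_notMem Z π hm)
    rw [hZ] at hm
    have hgq := hq g hg
    generalize q g = r at hm hgq
    subst hgq
    have h2 : x * (r * c₀ * r⁻¹) = (r * c₀ * r⁻¹) * x := by
      calc x * (r * c₀ * r⁻¹) = r * ((r⁻¹ * x * r) * c₀) * r⁻¹ := by group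
        _ = r * (c₀ * (r⁻¹ * x * r)) * r⁻¹ := by rw [hm]
        _ = (r * c₀ * r⁻¹) * x := by group
    rw [mul_assoc, ← h2, inv_mul_cancel_left]
  · exact absurd (Pproj_of_notMem C Z q π hg x) h

theorem Dmul_Pproj (hZ : ∀ n, n ∈ Z ↔ n * c₀ = c₀ * n)
    (hq : ∀ c ∈ C, q c * c₀ * (q c)⁻¹ = c)
    (b : G × G → ℂ) (g x : G) :
    Dmul (Pproj C q Z π) b (g, x) = ∑ h : G, Pproj C q Z π (g, h) * b (g, h⁻¹ * x) := by
  rw [Dmul_apply]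
  refine Finset.sum_congr rfl fun h _ => ?_
  by_cases hP : Pproj C q Z π (g, h) = 0
  · simp [hP]
  · rw [Pproj_support C c₀ Z q π hZ hq hP]

theorem Dmul_Pproj_Pproj (hZ : ∀ n, n ∈ Z ↔ n * c₀ = c₀ * n)
    (hq : ∀ c ∈ C, q c * c₀ * (q c)⁻¹ = c)
    {g : G} (hg : g ∈ C) (x : G) :
    Dmul (Pproj C q Z π) (Pproj C q Z σ) (g, x) =
      ∑ h : G, Fext Z π h * Fext Z σ (h⁻¹ * ((q g)⁻¹ * x * q g)) := by
  rw [Dmul_Pproj C c₀ Z q π hZ hq, ← (MulAut.conj (q g)).toEquiv.sum_comp]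
  refine Finset.sum_congr rfl fun h _ => ?_
  rw [Pproj_of_mem C Z q π hg, Pproj_of_mem C Z q σ hg]
  simp only [MulEquiv.toEquiv_eq_coe, MulEquiv.coe_toEquiv, MulAut.conj_apply]
  congr 2 <;> group

/-- Invariance of `P` under simultaneous conjugation: the cocycle `q_{ygy⁻¹}⁻¹ y q_g` lies in
`Z`, and `F` is a class function there. -/
theorem Pproj_conj (hC : ∀ g, g ∈ C ↔ IsConj c₀ g)
    (hZ : ∀ n, n ∈ Z ↔ n * c₀ = c₀ * n) (hq : ∀ c ∈ C, q c * c₀ * (q c)⁻¹ = c)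
    (y g x : G) :
    Pproj C q Z π (y * g * y⁻¹, y * x * y⁻¹) = Pproj C q Z π (g, x) := by
  have hiff : y * g * y⁻¹ ∈ C ↔ g ∈ C := by
    have hgy : IsConj g (y * g * y⁻¹) := isConj_iff.2 ⟨y, rfl⟩
    rw [hC, hC]
    exact ⟨fun h => h.trans hgy.symm, fun h => h.trans hgy⟩
  by_cases hg : g ∈ C
  · have hg' := hiff.2 hg
    rw [Pproj_of_mem C Z q π hg, Pproj_of_mem C Z q π hg']
    have h1 := hq _ hg
    have h2 := hq _ hg'
    generalize q (y * g * y⁻¹) = s at h2 ⊢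
    generalize q g = r at h1 ⊢
    have hn : s⁻¹ * y * r ∈ Z := by
      rw [hZ]
      calc s⁻¹ * y * r * c₀ = s⁻¹ * (y * (r * c₀ * r⁻¹) * y⁻¹) * (y * r) := by group
        _ = s⁻¹ * (s * c₀ * s⁻¹) * (y * r) := by rw [h1, h2]
        _ = c₀ * (s⁻¹ * y * r) := by group
    rw [← Fext_conj Z π _ hn (r⁻¹ * x * r)]
    congr 1
    group
  · rw [Pproj_of_notMem C Z q π hg, Pproj_of_notMem C Z q π (fun h => hg (hiff.1 h))]

theorem Pproj_central (hC : ∀ g, g ∈ C ↔ IsConj c₀ g)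
    (hZ : ∀ n, n ∈ Z ↔ n * c₀ = c₀ * n) (hq : ∀ c ∈ C, q c * c₀ * (q c)⁻¹ = c)
    (a : G × G → ℂ) :
    Dmul (Pproj C q Z π) a = Dmul a (Pproj C q Z π) := by
  ext ⟨g, x⟩
  rw [Dmul_Pproj C c₀ Z q π hZ hq, Dmul_apply]
  refine Fintype.sum_equiv ((Equiv.inv G).trans (Equiv.mulRight x)) _ _ fun k => ?_
  simp only [Equiv.trans_apply, Equiv.inv_apply, Equiv.coe_mulRight]
  rw [mul_comm, ← Pproj_conj C c₀ Z q π hC hZ hq (x⁻¹ * k) g k]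
  congr 3 <;> group

end Pproj

/-- Each `P_{(C,π)}` is a central idempotent of `D(G)`; moreover for a
second datum `(C', c₀', q', π')`, `P_{(C,π)}·P_{(C',π')} = 0` whenever `C ≠ C'`, and also
whenever `C = C'` (same `c₀`, `q`) but `π, π'` are non-isomorphic representations of
`G^{c₀}`. -/
theorem statement17 {G : Type} [Group G] [Fintype G]
    (C : Set G) (c₀ : G) (hc₀ : c₀ ∈ C) (hC : ∀ g, g ∈ C ↔ IsConj c₀ g)
    (Z : Subgroup G) (hZ : ∀ n, n ∈ Z ↔ n * c₀ = c₀ * n)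
    (q : G → G) (hq : ∀ c ∈ C, q c * c₀ * (q c)⁻¹ = c) (hq₀ : q c₀ = 1)
    {W : Type} [AddCommGroup W] [Module ℂ W] [FiniteDimensional ℂ W]
    (π : Z →* (W →ₗ[ℂ] W))
    (hπ_nontrivial : Nontrivial W)
    (hπ_irr : ∀ U : Submodule ℂ W, (∀ n : Z, ∀ w ∈ U, π n w ∈ U) → U = ⊥ ∨ U = ⊤)
    -- a second conjugacy-class datum
    (C' : Set G) (c₀' : G) (hc₀' : c₀' ∈ C') (hC' : ∀ g, g ∈ C' ↔ IsConj c₀' g)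
    (Z' : Subgroup G) (hZ' : ∀ n, n ∈ Z' ↔ n * c₀' = c₀' * n)
    (q' : G → G) (hq' : ∀ c ∈ C', q' c * c₀' * (q' c)⁻¹ = c) (hq₀' : q' c₀' = 1)
    {W' : Type} [AddCommGroup W'] [Module ℂ W'] [FiniteDimensional ℂ W']
    (π' : Z' →* (W' →ₗ[ℂ] W'))
    (hπ'_nontrivial : Nontrivial W')
    (hπ'_irr : ∀ U : Submodule ℂ W', (∀ n : Z', ∀ w ∈ U, π' n w ∈ U) → U = ⊥ ∨ U = ⊤)
    -- a second representation of the same centraliser `G^{c₀}`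
    {W'' : Type} [AddCommGroup W''] [Module ℂ W''] [FiniteDimensional ℂ W'']
    (π'' : Z →* (W'' →ₗ[ℂ] W''))
    (hπ''_nontrivial : Nontrivial W'')
    (hπ''_irr : ∀ U : Submodule ℂ W'', (∀ n : Z, ∀ w ∈ U, π'' n w ∈ U) → U = ⊥ ∨ U = ⊤) :
    (Dmul (Pproj C q Z π) (Pproj C q Z π) = Pproj C q Z π) ∧
    (∀ a : G × G → ℂ, Dmul (Pproj C q Z π) a = Dmul a (Pproj C q Z π)) ∧
    (C ≠ C' → Dmul (Pproj C q Z π) (Pproj C' q' Z' π') = 0) ∧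
    ((¬ ∃ e : W ≃ₗ[ℂ] W'', ∀ (n : Z) (w : W), e (π n w) = π'' n (e w)) →
      Dmul (Pproj C q Z π) (Pproj C q Z π'') = 0) := by
  have := isIrreducible_of_forall π hπ_irr
  have := isIrreducible_of_forall π'' hπ''_irr
  refine ⟨?_, Pproj_central C c₀ Z q π hC hZ hq, ?_, ?_⟩
  · ext ⟨g, x⟩
    by_cases hg : g ∈ C
    · rw [Dmul_Pproj_Pproj C c₀ Z q π π hZ hq hg, Fext_conv_self, Pproj_of_mem C Z q π hg]
    · simp [Dmul_Pproj C c₀ Z q π hZ hq, Pproj_of_notMem C Z q π hg]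
  · intro hne
    -- distinct conjugacy classes are disjoint
    have hdisj : ∀ g, g ∈ C → g ∉ C' := by
      intro g hg hg'
      apply hne
      ext k
      rw [hC, hC']
      rw [hC] at hg
      rw [hC'] at hg'
      exact ⟨fun h => hg'.trans (hg.symm.trans h), fun h => hg.trans (hg'.symm.trans h)⟩
    ext ⟨g, x⟩
    rw [Dmul_Pproj C c₀ Z q π hZ hq]
    refine Finset.sum_eq_zero fun h _ => ?_
    by_cases hg : g ∈ C
    · rw [Pproj_of_notMem C' Z' q' π' (hdisj g hg), mul_zero]
    · rw [Pproj_of_notMem C Z q π hg, zero_mul]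
  · intro hne
    ext ⟨g, x⟩
    by_cases hg : g ∈ C
    · rw [Dmul_Pproj_Pproj C c₀ Z q π π'' hZ hq hg, Fext_conv_of_not_iso Z π π'' hne]
      rfl
    · simp [Dmul_Pproj C c₀ Z q π hZ hq, Pproj_of_notMem C Z q π hg]
end

section
/- Each P_{(O,ρ)} is a central idempotent of Ξ(R,K): P_{(O,ρ)}·P_{(O,ρ)} = P_{(O,ρ)} and P_{(O,ρ)}·a = a·P_{(O,ρ)} for all a ∈ Ξ(R,K). For two such data, P_{(O,ρ)}·P_{(O',ρ')} = 0 whenever O ≠ O', and also whenever O = O' (with the same r₀ and κ) but ρ and ρ' are non-isomorphic. Moreover, if for each ▷-orbit O of R one fixes a finite family of pairwise non-isomorphic irreducible representations of K^{r₀} such that every irreducible representation of K^{r₀} is isomorphic to a member, then the sum of P_{(O,ρ)} over all orbits O and all members ρ of the corresponding families equals the unit of Ξ(R,K). -/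
/-!
Since `g = r x` is a unique factorisation, `▷` is an action of `K` on `R`, and the product on
`Ξ(R,K)` is that of the crossed product of functions on `R` by `K`. Write
`e_V(z) = (dim V/|Z|) χ_V(z⁻¹)` for `z ∈ Z`, extended by zero to `K` (`extChi`), so that
`P(r,z) = e_V(κ_r⁻¹ z κ_r)` for `r` in the orbit (`XiProj_apply`).

* `P` is supported on pairs `(r,x)` with `x ▷ r = r` (`XiProj_eq_zero`) and is invariant under
  `(r,w) ↦ (k ▷ r, k w k⁻¹)` (`XiProj_equivariant`), because `κ_{k▷r}` and `k κ_r` differ by an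
  element of `Z` and `χ_V` is a class function. Centrality follows by reindexing the sum.
* By the support property, a product of two `P`s on the same orbit is a convolution over `K`,
  which after conjugation by `κ_r` is the convolution `e_V * e_W` on `Z`. By Schur's lemma and
  orthogonality of characters it is `e_W` if `V ≅ W` and `0` otherwise (`Rep'.sum_chi_smul`,
  `Rep'.conv_chi`, `extChi_conv`).
* Completeness: at `(r,z)` only the orbit of `r` contributes, and the sum of `e_V` over a complete
  family of irreducibles is the indicator of `1` (`Rep'.sum_family`), by semisimplicity of `ℂ[Z]`.
-/

open scoped Classical

/-- A bundled finite-dimensional complex representation of a group `H`. -/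
structure Rep' (H : Type) [Group H] where
  carrier : Type
  [acg : AddCommGroup carrier]
  [mod : Module ℂ carrier]
  [fd : FiniteDimensional ℂ carrier]
  ρ : H →* (carrier →ₗ[ℂ] carrier)

attribute [instance] Rep'.acg Rep'.mod Rep'.fd

/-- Irreducibility of a representation. -/
def Rep'.IsIrreducible {H : Type} [Group H] (V : Rep' H) : Prop :=
  Nontrivial V.carrier ∧
    ∀ U : Submodule ℂ V.carrier, (∀ g : H, ∀ v ∈ U, V.ρ g v ∈ U) → U = ⊥ ∨ U = ⊤

/-- Isomorphism of representations. -/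
def Rep'.Iso {H : Type} [Group H] (V W : Rep' H) : Prop :=
  ∃ e : V.carrier ≃ₗ[ℂ] W.carrier, ∀ (g : H) (v : V.carrier), e (V.ρ g v) = W.ρ g (e v)

/-- The product of the boundary algebra `Ξ(R,K)` realised on functions `R × K → ℂ`:
`(a·b)(r,z) = Σ_{xy=z} a(r,x)·b(x⁻¹▷r, y)`. -/
noncomputable def Ximul {G : Type} [Group G] [Fintype G] {K : Subgroup G} {R : Set G}
    (act : K → R → R) (a b : R × K → ℂ) : R × K → ℂ :=
  fun p => ∑ x : K, ∑ y : K,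
    if x * y = p.2 then a (p.1, x) * b (act x⁻¹ p.1, y) else 0

/-- The element `P_{(O,ρ)} ∈ Ξ(R,K)`, where `O` is the `▷`-orbit of `r₀`:
`P_{(O,ρ)}(r,z) = (dim ρ/|K^{r₀}|)·χ_ρ((κ_r⁻¹ z κ_r)⁻¹)` if `r ∈ O` and
`κ_r⁻¹ z κ_r ∈ K^{r₀}`, and `0` otherwise. -/
noncomputable def XiProj {G : Type} [Group G] [Fintype G] {K : Subgroup G} {R : Set G}
    (act : K → R → R) (r₀ : R) (Z : Subgroup K) (κ : R → K)
    (V : Rep' ↥Z) : R × K → ℂ :=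
  fun p =>
    if h : (∃ x : K, act x r₀ = p.1) ∧ (κ p.1)⁻¹ * p.2 * κ p.1 ∈ Z then
      ((Module.finrank ℂ V.carrier : ℂ) / (Nat.card Z : ℂ)) *
        LinearMap.trace ℂ V.carrier (V.ρ ((⟨(κ p.1)⁻¹ * p.2 * κ p.1, h.2⟩ : Z)⁻¹))
    else 0

/-! ### Irreducible representations of a finite group -/

namespace Rep'

variable {H : Type} [Group H]

lemma IsIrreducible.isIrreducible {V : Rep' H} (hV : V.IsIrreducible) :
    Representation.IsIrreducible (k := ℂ) V.ρ := by
  obtain ⟨hnt, h⟩ := hV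
  refine { exists_pair_ne := ⟨⊥, ⊤, fun e => ?_⟩, eq_bot_or_eq_top := fun U => ?_ }
  · have := congrArg Subrepresentation.toSubmodule e
    exact bot_ne_top (α := Submodule ℂ V.carrier) this
  · rcases h U.toSubmodule (fun g v hv => U.apply_mem_toSubmodule g hv) with h | h
    · left; exact Subrepresentation.toSubmodule_injective h
    · right; exact Subrepresentation.toSubmodule_injective h

lemma nonempty_equiv_iff (V W : Rep' H) :
    Nonempty (Representation.Equiv (A := ℂ) V.ρ W.ρ) ↔ V.Iso W := by
  constructor
  · rintro ⟨φ⟩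
    exact ⟨φ.toLinearEquiv, fun g v => LinearMap.congr_fun (φ.isIntertwining' g) v⟩
  · rintro ⟨e, he⟩
    exact ⟨Representation.Equiv.mk e (fun g => LinearMap.ext fun v => he g v)⟩

/-- The character of `V`. -/
noncomputable def chi (V : Rep' H) (h : H) : ℂ := LinearMap.trace ℂ V.carrier (V.ρ h)

lemma chi_mul_comm (V : Rep' H) (g h : H) : V.chi (g * h) = V.chi (h * g) :=
  Representation.char_mul_comm (k := ℂ) V.ρ h g

/-- Orthogonality of irreducible characters. -/
lemma sum_chi [Fintype H] {V W : Rep' H} (hV : V.IsIrreducible) (hW : W.IsIrreducible) :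
    ∑ x : H, V.chi x⁻¹ * W.chi x = if V.Iso W then (Nat.card H : ℂ) else 0 := by
  have h0 : (Nat.card H : ℂ) ≠ 0 := Nat.cast_ne_zero.mpr Nat.card_pos.ne'
  have := hV.isIrreducible
  have := hW.isIrreducible
  have : Invertible (Nat.card H : ℂ) := invertibleOfNonzero h0
  have key := Representation.char_orthonormal (k := ℂ) W.ρ V.ρ
  rw [inv_mul_eq_iff_eq_mul₀ h0] at key
  simp only [nonempty_equiv_iff] at key
  rw [show (∑ x : H, V.chi x⁻¹ * W.chi x) = _ from
    (Finset.sum_congr rfl fun x _ => mul_comm _ _).trans key]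
  split_ifs <;> simp

/-- Schur's lemma: an eigenspace of an intertwiner is a nonzero invariant subspace. -/
lemma schur {W : Rep' H} (hW : W.IsIrreducible) (f : W.carrier →ₗ[ℂ] W.carrier)
    (hf : ∀ g v, f (W.ρ g v) = W.ρ g (f v)) : ∃ c : ℂ, f = c • LinearMap.id := by
  obtain ⟨hnt, h⟩ := hW
  obtain ⟨c, hc⟩ := Module.End.exists_eigenvalue (K := ℂ) f
  refine ⟨c, ?_⟩
  have htop : Module.End.eigenspace f c = ⊤ := by
    refine (h _ fun g v hv => ?_).resolve_left hc
    rw [Module.End.mem_eigenspace_iff] at hv ⊢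
    rw [hf, hv, map_smul]
  ext v
  have : v ∈ Module.End.eigenspace f c := htop ▸ Submodule.mem_top
  simpa [Module.End.mem_eigenspace_iff] using this

lemma IsIrreducible.finrank_ne_zero {V : Rep' H} (hV : V.IsIrreducible) :
    (Module.finrank ℂ V.carrier : ℂ) ≠ 0 := by
  have := hV.1
  exact Nat.cast_ne_zero.mpr Module.finrank_pos.ne'

/-- The central element `(dim V / |H|) ∑ χ_V(x⁻¹) x` of the group algebra acts on an irreducible
`W` as the identity or as zero, according to whether `V ≅ W`. -/
lemma sum_chi_smul [Fintype H] {V W : Rep' H} (hV : V.IsIrreducible) (hW : W.IsIrreducible) :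
    ∑ x : H, ((Module.finrank ℂ V.carrier : ℂ) / (Nat.card H : ℂ) * V.chi x⁻¹) • W.ρ x =
      (if V.Iso W then (1 : ℂ) else 0) • LinearMap.id := by
  set d : ℂ := (Module.finrank ℂ V.carrier : ℂ) / (Nat.card H : ℂ) with hd
  obtain ⟨c, hc⟩ := schur hW (∑ x : H, (d * V.chi x⁻¹) • W.ρ x) (by
    intro g v
    simp only [LinearMap.sum_apply, LinearMap.smul_apply, map_sum, map_smul]
    -- reindex by conjugation with `g`
    refine Fintype.sum_equiv (MulAut.conj g⁻¹).toEquiv _ _ fun x => ?_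
    have h1 : V.chi (g⁻¹ * x * g⁻¹⁻¹)⁻¹ = V.chi x⁻¹ := by
      rw [show (g⁻¹ * x * g⁻¹⁻¹)⁻¹ = g⁻¹ * (x⁻¹ * g) by group, chi_mul_comm]
      simp
    have h2 : W.ρ g (W.ρ (g⁻¹ * x * g⁻¹⁻¹) v) = W.ρ x (W.ρ g v) := by
      rw [← Module.End.mul_apply, ← Module.End.mul_apply, ← map_mul, ← map_mul]
      congr 2; group
    simp only [MulEquiv.toEquiv_eq_coe, MulEquiv.coe_toEquiv, MulAut.conj_apply]
    rw [h1, h2])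
  rw [hc]
  congr 1
  have h0 : (Nat.card H : ℂ) ≠ 0 := Nat.cast_ne_zero.mpr Nat.card_pos.ne'
  have ht := congrArg (LinearMap.trace ℂ W.carrier) hc
  rw [map_sum, map_smul, LinearMap.trace_id] at ht
  simp only [map_smul, smul_eq_mul, mul_assoc] at ht
  rw [← Finset.mul_sum, show ∑ x : H, V.chi x⁻¹ * LinearMap.trace ℂ W.carrier (W.ρ x) = _ from
    sum_chi hV hW] at ht
  have hWd := hW.finrank_ne_zero
  apply mul_right_cancel₀ hWd
  rw [← ht]
  split_ifs with hiso
  · obtain ⟨e, -⟩ := hiso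
    rw [hd, div_mul_cancel₀ _ h0, e.finrank_eq, one_mul]
  · simp

/-- Convolution of irreducible characters: the trace of `W(z⁻¹)` composed with the operator of
`sum_chi_smul`. -/
lemma conv_chi [Fintype H] {V W : Rep' H} (hV : V.IsIrreducible) (hW : W.IsIrreducible) (z : H) :
    ∑ x : H, ((Module.finrank ℂ V.carrier : ℂ) / (Nat.card H : ℂ) * V.chi x⁻¹) *
      W.chi (x⁻¹ * z)⁻¹ = (if V.Iso W then (1 : ℂ) else 0) * W.chi z⁻¹ := by
  have h := congrArg (fun f => LinearMap.trace ℂ W.carrier (W.ρ z⁻¹ * f)) (sum_chi_smul hV hW)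
  simp only [Finset.mul_sum, map_sum, mul_smul_comm, map_smul, smul_eq_mul, ← map_mul] at h
  rw [show W.ρ z⁻¹ * LinearMap.id = W.ρ z⁻¹ from mul_one _] at h
  simpa [chi, mul_inv_rev] using h

lemma Iso.refl (V : Rep' H) : V.Iso V := ⟨LinearEquiv.refl ℂ _, fun _ _ => rfl⟩

/-- A left ideal of `ℂ[H]` as a representation of `H`. -/
noncomputable def ofIdeal [Finite H] (I : Submodule (MonoidAlgebra ℂ H) (MonoidAlgebra ℂ H)) :
    Rep' H where
  carrier := I
  fd := by
    exact inferInstanceAs (FiniteDimensional ℂ (I.restrictScalars ℂ))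
  ρ := (Algebra.lsmul ℂ ℂ I : MonoidAlgebra ℂ H →ₐ[ℂ] _).toMonoidHom.comp (MonoidAlgebra.of ℂ H)

lemma ofIdeal_irreducible [Finite H] (I : Submodule (MonoidAlgebra ℂ H) (MonoidAlgebra ℂ H))
    [hI : IsSimpleModule (MonoidAlgebra ℂ H) I] : (ofIdeal I).IsIrreducible := by
  refine ⟨IsSimpleModule.nontrivial (MonoidAlgebra ℂ H) I, fun U hU => ?_⟩
  let U' : Submodule (MonoidAlgebra ℂ H) I :=
    MonoidAlgebra.submoduleOfSMulMem (S := ℂ) (V := I) U (fun g v hv => hU g v hv)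
  rcases eq_bot_or_eq_top U' with h | h
  · left
    exact SetLike.coe_injective (congrArg (fun S : Submodule (MonoidAlgebra ℂ H) I => (S : Set I)) h)
  · right
    exact SetLike.coe_injective (congrArg (fun S : Submodule (MonoidAlgebra ℂ H) I => (S : Set I)) h)

/-- The regular character: for a complete family of irreducibles,
`∑_j (dim V_j / |H|) χ_j(z⁻¹) = δ_{z,1}`. The group algebra element with these coefficients fixes
every simple left ideal, hence all of the semisimple ring `ℂ[H]`, so it is `1`. -/
lemma sum_family [Fintype H] {m : ℕ} (fam : Fin m → Rep' H)
    (hirr : ∀ j, (fam j).IsIrreducible)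
    (hdist : ∀ j j', j ≠ j' → ¬ (fam j).Iso (fam j'))
    (hall : ∀ σ : Rep' H, σ.IsIrreducible → ∃ j, (fam j).Iso σ) (z : H) :
    ∑ j, (Module.finrank ℂ (fam j).carrier : ℂ) / (Nat.card H : ℂ) * (fam j).chi z⁻¹ =
      if z = 1 then 1 else 0 := by
  set f : H → ℂ := fun z =>
    ∑ j, (Module.finrank ℂ (fam j).carrier : ℂ) / (Nat.card H : ℂ) * (fam j).chi z⁻¹ with hf
  have hact : ∀ σ : Rep' H, σ.IsIrreducible → ∑ x, f x • σ.ρ x = LinearMap.id := by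
    intro σ hσ
    obtain ⟨j₀, e₀, he₀⟩ := hall σ hσ
    simp only [hf, Finset.sum_smul]
    rw [Finset.sum_comm]
    simp only [sum_chi_smul (hirr _) hσ]
    rw [Finset.sum_eq_single j₀]
    · rw [if_pos ⟨e₀, he₀⟩, one_smul]
    · intro j _ hj
      rw [if_neg, zero_smul]
      rintro ⟨e, he⟩
      refine hdist j j₀ hj ⟨e.trans e₀.symm, fun g v => ?_⟩
      rw [LinearEquiv.trans_apply, LinearEquiv.symm_apply_eq, he, he₀]
      simp
    · simp
  let E : MonoidAlgebra ℂ H := ∑ x, f x • MonoidAlgebra.of ℂ H x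
  have hE : ∀ v : MonoidAlgebra ℂ H, E * v = v := by
    intro v
    have hv : v ∈ sSup {m : Submodule (MonoidAlgebra ℂ H) (MonoidAlgebra ℂ H) |
        IsSimpleModule (MonoidAlgebra ℂ H) m} := by
      have : NeZero (Nat.card H : ℂ) := ⟨Nat.cast_ne_zero.mpr Nat.card_pos.ne'⟩
      rw [IsSemisimpleModule.sSup_simples_eq_top]
      exact Submodule.mem_top
    rw [sSup_eq_iSup'] at hv
    refine Submodule.iSup_induction _ (motive := fun v => E * v = v) hv ?_ (mul_zero _) ?_
    · rintro ⟨I, hI⟩ v hv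
      have : IsSimpleModule (MonoidAlgebra ℂ H) I := hI
      have h1 := LinearMap.congr_fun (hact (ofIdeal I) (ofIdeal_irreducible I))
        (show (ofIdeal I).carrier from (⟨v, hv⟩ : I))
      rw [LinearMap.sum_apply] at h1
      have h2 := (map_sum I.subtype _ _).symm.trans (congrArg I.subtype h1)
      rw [Finset.sum_mul]
      refine Eq.trans (Finset.sum_congr rfl fun x _ => ?_) h2
      exact smul_mul_assoc (f x) _ v
    · intro a b ha hb
      rw [mul_add, ha, hb]
  have h1 := congrArg (fun a : MonoidAlgebra ℂ H => a.coeff z) (hE 1)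
  simp only [mul_one, E] at h1
  change f z = _
  simpa [MonoidAlgebra.one_def, Finsupp.single_apply, eq_comm (a := (1 : H))] using h1

end Rep'

/-! ### Normalised characters of a subgroup, extended by zero -/

/-- The function `z ↦ (dim V / |Z|) χ_V(z⁻¹)` on `Z`, extended by zero to the ambient group. -/
noncomputable def extChi {K : Type} [Group K] {Z : Subgroup K} (V : Rep' ↥Z) (z : K) : ℂ :=
  if h : z ∈ Z then (Module.finrank ℂ V.carrier : ℂ) / (Nat.card Z : ℂ) * V.chi (⟨z, h⟩ : Z)⁻¹
  else 0

section extChi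

variable {K : Type} [Group K] {Z : Subgroup K}

lemma extChi_of_notMem (V : Rep' ↥Z) {z : K} (h : z ∉ Z) : extChi V z = 0 := dif_neg h

lemma extChi_coe (V : Rep' ↥Z) (z : Z) : extChi V (z : K) =
    (Module.finrank ℂ V.carrier : ℂ) / (Nat.card Z : ℂ) * V.chi z⁻¹ := dif_pos z.2

lemma extChi_conj (V : Rep' ↥Z) {h : K} (hh : h ∈ Z) (w : K) :
    extChi V (h⁻¹ * w * h) = extChi V w := by
  by_cases hw : w ∈ Z
  · have h1 := extChi_coe V ((⟨h, hh⟩ : Z)⁻¹ * ⟨w, hw⟩ * ⟨h, hh⟩)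
    have h2 := extChi_coe V ⟨w, hw⟩
    rw [mul_inv_rev, mul_inv_rev, V.chi_mul_comm] at h1
    simp only [inv_inv, mul_assoc, mul_inv_cancel, mul_one] at h1
    rw [h2, ← h1]
    simp [mul_assoc]
  · have hw' : h⁻¹ * w * h ∉ Z := fun hc => hw (by
      have := Z.mul_mem (Z.mul_mem hh hc) (Z.inv_mem hh)
      simpa [mul_assoc] using this)
    rw [extChi_of_notMem V hw, extChi_of_notMem V hw']

/-- The functions `extChi V`, for `V` irreducible, are orthogonal idempotents for convolution
on `K`. -/
lemma extChi_conv [Fintype K] {V W : Rep' ↥Z} (hV : V.IsIrreducible) (hW : W.IsIrreducible)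
    (w : K) : ∑ x : K, extChi V x * extChi W (x⁻¹ * w) =
      (if V.Iso W then (1 : ℂ) else 0) * extChi W w := by
  by_cases hw : w ∈ Z
  · have h := Rep'.conv_chi hV hW (⟨w, hw⟩ : Z)
    have h2 := extChi_coe W ⟨w, hw⟩
    simp only at h2
    rw [h2, mul_left_comm, ← h, Finset.mul_sum]
    symm
    -- terms with `x ∉ Z` vanish
    refine Fintype.sum_of_injective (Subtype.val : Z → K) Subtype.val_injective _ _ ?_ ?_
    · intro x hx
      rw [extChi_of_notMem V (by simpa using hx), zero_mul]
    · intro x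
      have h3 := extChi_coe W (x⁻¹ * ⟨w, hw⟩)
      simp only [Subgroup.coe_mul, Subgroup.coe_inv] at h3
      rw [h3, extChi_coe]
      ring
  · rw [extChi_of_notMem W hw, mul_zero]
    refine Finset.sum_eq_zero fun x _ => ?_
    by_cases hx : x ∈ Z
    · rw [extChi_of_notMem W (z := x⁻¹ * w), mul_zero]
      intro hc
      exact hw (by simpa using Z.mul_mem hx hc)
    · rw [extChi_of_notMem V hx, zero_mul]

lemma sum_extChi [Finite K] {m : ℕ} (fam : Fin m → Rep' ↥Z)
    (hirr : ∀ j, (fam j).IsIrreducible)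
    (hdist : ∀ j j', j ≠ j' → ¬ (fam j).Iso (fam j'))
    (hall : ∀ σ : Rep' ↥Z, σ.IsIrreducible → ∃ j, (fam j).Iso σ) (w : K) :
    ∑ j, extChi (fam j) w = if w = 1 then 1 else 0 := by
  by_cases hw : w ∈ Z
  · have := Fintype.ofFinite Z
    have h := Rep'.sum_family fam hirr hdist hall ⟨w, hw⟩
    simp only [Subgroup.mk_eq_one] at h
    rw [← h]
    exact Finset.sum_congr rfl fun j _ => extChi_coe (fam j) ⟨w, hw⟩
  · rw [if_neg fun h : w = 1 => hw (h ▸ Z.one_mem)]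
    exact Finset.sum_eq_zero fun j _ => extChi_of_notMem (fam j) hw

end extChi

/-! ### The projections in the boundary algebra -/

section Xi

variable {G : Type} [Group G] {K : Subgroup G} {R : Set G} {act : K → R → R}

lemma Ximul_apply [Fintype G] (a b : R × K → ℂ) (r : R) (z : K) :
    Ximul act a b (r, z) = ∑ x : K, a (r, x) * b (act x⁻¹ r, x⁻¹ * z) := by
  refine Finset.sum_congr rfl fun x _ => ?_
  rw [Finset.sum_eq_single (x⁻¹ * z)]
  · simp
  · intro y _ hy
    rw [if_neg]
    rintro rfl
    simp at hy
  · simp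

lemma XiProj_apply [Fintype G] (r₀ : R) (Z : Subgroup K) (κ : R → K) (V : Rep' ↥Z) (r : R) (z : K) :
    XiProj act r₀ Z κ V (r, z) =
      if ∃ x : K, act x r₀ = r then extChi V ((κ r)⁻¹ * z * κ r) else 0 := by
  unfold XiProj extChi Rep'.chi
  by_cases h1 : ∃ x : K, act x r₀ = r <;> by_cases h2 : (κ r)⁻¹ * z * κ r ∈ Z <;> simp [h1, h2]

/-- `▷` is a left action of `K` on `R`. -/
structure IsAct (act : K → R → R) : Prop where
  one : ∀ r, act 1 r = r
  mul : ∀ x y r, act (x * y) r = act x (act y r)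

/-- Uniqueness of the factorisation `G = R K` makes `▷` an action. -/
lemma isAct_of_factorisation
    (huniq : ∀ (r r' : R) (x x' : K),
      (r : G) * (x : G) = (r' : G) * (x' : G) → r = r' ∧ x = x')
    (coact : K → R → K)
    (hfac : ∀ (x : K) (r : R), (x : G) * (r : G) = (act x r : G) * (coact x r : G)) :
    IsAct act where
  one r := (huniq (act 1 r) r (coact 1 r) 1 (by rw [← hfac]; simp)).1
  mul x y r := (huniq (act (x * y) r) (act x (act y r)) (coact (x * y) r)
    (coact x (act y r) * coact y r) (by
      rw [← hfac, Subgroup.coe_mul, Subgroup.coe_mul, mul_assoc, hfac y r, ← mul_assoc,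
        hfac x, mul_assoc])).1

lemma IsAct.inv_act (hact : IsAct act) (x : K) (r : R) : act x⁻¹ (act x r) = r := by
  rw [← hact.mul, inv_mul_cancel, hact.one]

lemma IsAct.act_inv (hact : IsAct act) (x : K) (r : R) : act x (act x⁻¹ r) = r := by
  rw [← hact.mul, mul_inv_cancel, hact.one]

lemma IsAct.mem_orbit_iff (hact : IsAct act) (r₀ : R) (k : K) (r : R) :
    (∃ x : K, act x r₀ = act k r) ↔ ∃ x : K, act x r₀ = r := by
  constructor
  · rintro ⟨x, hx⟩
    exact ⟨k⁻¹ * x, by rw [hact.mul, hx, hact.inv_act]⟩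
  · rintro ⟨x, hx⟩
    exact ⟨k * x, by rw [hact.mul, hx]⟩

/-- Projections on distinct orbits annihilate each other. -/
lemma XiProj_mul_eq_zero [Fintype G] (hact : IsAct act) {r₀ : R} {Z : Subgroup K}
    {κ : R → K} (V : Rep' ↥Z) {r₀' : R} {Z' : Subgroup K} {κ' : R → K} (W : Rep' ↥Z')
    (hO : {r : R | ∃ x : K, act x r₀ = r} ≠ {r : R | ∃ x : K, act x r₀' = r}) :
    Ximul act (XiProj act r₀ Z κ V) (XiProj act r₀' Z' κ' W) = 0 := by
  ext ⟨r, z⟩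
  rw [Ximul_apply]
  refine Finset.sum_eq_zero fun x _ => ?_
  rw [XiProj_apply, XiProj_apply]
  split_ifs with h h'
  · exfalso
    rw [hact.mem_orbit_iff] at h'
    obtain ⟨y, rfl⟩ := h
    rw [hact.mem_orbit_iff] at h'
    obtain ⟨y', rfl⟩ := h'
    exact hO (Set.ext fun s => ⟨fun ⟨u, hu⟩ => ⟨u * y', by rw [hact.mul, hu]⟩,
      fun ⟨u, hu⟩ => ⟨u * y'⁻¹, by rw [hact.mul, hact.inv_act, hu]⟩⟩)
  all_goals simp

/-- `P` is supported on pairs `(r, x)` with `x` in the isotropy group of `r`. -/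
lemma XiProj_eq_zero [Fintype G] (hact : IsAct act) {r₀ : R} {Z : Subgroup K}
    (hZ : ∀ x : K, x ∈ Z ↔ act x r₀ = r₀) {κ : R → K}
    (hκ : ∀ r : R, (∃ x : K, act x r₀ = r) → act (κ r) r₀ = r)
    (V : Rep' ↥Z) {r : R} {x : K} (hx : act x⁻¹ r ≠ r) :
    XiProj act r₀ Z κ V (r, x) = 0 := by
  rw [XiProj_apply]
  split_ifs with h
  · refine extChi_of_notMem V fun hc => hx ?_
    rw [hZ, hact.mul, hact.mul, hκ r h] at hc
    have h1 := congrArg (act (κ r)) hc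
    rw [hact.act_inv, hκ r h] at h1
    nth_rw 1 [← h1]
    exact hact.inv_act x r
  · rfl

/-- `P` is invariant under the simultaneous action of `K` on `R` and by conjugation on `K`. -/
lemma XiProj_equivariant [Fintype G] (hact : IsAct act) {r₀ : R} {Z : Subgroup K}
    (hZ : ∀ x : K, x ∈ Z ↔ act x r₀ = r₀) {κ : R → K}
    (hκ : ∀ r : R, (∃ x : K, act x r₀ = r) → act (κ r) r₀ = r)
    (V : Rep' ↥Z) (k : K) (r : R) (w : K) :
    XiProj act r₀ Z κ V (act k r, k * w * k⁻¹) = XiProj act r₀ Z κ V (r, w) := by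
  rw [XiProj_apply, XiProj_apply, if_congr (hact.mem_orbit_iff r₀ k r) rfl rfl]
  split_ifs with h
  · have hh : (κ r)⁻¹ * k⁻¹ * κ (act k r) ∈ Z := by
      rw [hZ, hact.mul, hact.mul, hκ _ ((hact.mem_orbit_iff r₀ k r).2 h), hact.inv_act]
      nth_rw 2 [← hκ r h]
      exact hact.inv_act _ _
    rw [← extChi_conj V hh ((κ r)⁻¹ * w * κ r)]
    congr 1
    group
  · rfl

lemma XiProj_mul_apply [Fintype G] (hact : IsAct act) {r₀ : R} {Z : Subgroup K}
    (hZ : ∀ x : K, x ∈ Z ↔ act x r₀ = r₀) {κ : R → K}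
    (hκ : ∀ r : R, (∃ x : K, act x r₀ = r) → act (κ r) r₀ = r)
    (V : Rep' ↥Z) (b : R × K → ℂ) (r : R) (z : K) :
    Ximul act (XiProj act r₀ Z κ V) b (r, z) =
      ∑ x : K, XiProj act r₀ Z κ V (r, x) * b (r, x⁻¹ * z) := by
  rw [Ximul_apply]
  refine Finset.sum_congr rfl fun x _ => ?_
  by_cases hx : act x⁻¹ r = r
  · rw [hx]
  · rw [XiProj_eq_zero hact hZ hκ V hx, zero_mul, zero_mul]

lemma XiProj_central [Fintype G] (hact : IsAct act) {r₀ : R} {Z : Subgroup K}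
    (hZ : ∀ x : K, x ∈ Z ↔ act x r₀ = r₀) {κ : R → K}
    (hκ : ∀ r : R, (∃ x : K, act x r₀ = r) → act (κ r) r₀ = r)
    (V : Rep' ↥Z) (a : R × K → ℂ) :
    Ximul act (XiProj act r₀ Z κ V) a = Ximul act a (XiProj act r₀ Z κ V) := by
  ext ⟨r, z⟩
  rw [XiProj_mul_apply hact hZ hκ, Ximul_apply]
  refine Fintype.sum_equiv ((Equiv.inv K).trans (Equiv.mulRight z)) _ _ fun x => ?_
  have h := XiProj_equivariant hact hZ hκ V (x⁻¹ * z)⁻¹ r x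
  simp only [Equiv.trans_apply, Equiv.inv_apply, Equiv.coe_mulRight]
  rw [mul_comm, ← h]
  congr 3
  group

/-- Products of projections on the same orbit reduce to convolution on the isotropy group. -/
lemma XiProj_mul_XiProj [Fintype G] (hact : IsAct act) {r₀ : R} {Z : Subgroup K}
    (hZ : ∀ x : K, x ∈ Z ↔ act x r₀ = r₀) {κ : R → K}
    (hκ : ∀ r : R, (∃ x : K, act x r₀ = r) → act (κ r) r₀ = r)
    {V W : Rep' ↥Z} (hV : V.IsIrreducible) (hW : W.IsIrreducible) :
    Ximul act (XiProj act r₀ Z κ V) (XiProj act r₀ Z κ W) =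
      (if V.Iso W then (1 : ℂ) else 0) • XiProj act r₀ Z κ W := by
  ext ⟨r, z⟩
  rw [XiProj_mul_apply hact hZ hκ, Pi.smul_apply, smul_eq_mul]
  simp only [XiProj_apply]
  by_cases h : ∃ x : K, act x r₀ = r
  · simp only [if_pos h]
    rw [← extChi_conv hV hW]
    -- substitute `x = κ_r y κ_r⁻¹`
    refine Fintype.sum_equiv (MulAut.conj (κ r)⁻¹).toEquiv _ _ fun x => ?_
    simp only [MulEquiv.toEquiv_eq_coe, MulEquiv.coe_toEquiv, MulAut.conj_apply, inv_inv]
    congr 2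
    group
  · simp only [if_neg h, mul_zero, Finset.sum_const_zero]

end Xi

/-- Each `P_{(O,ρ)}` is a central idempotent of `Ξ(R,K)`; for two such
data, `P_{(O,ρ)}·P_{(O',ρ')} = 0` if `O ≠ O'`, and also if `O = O'` (same `r₀`, `κ`) but
`ρ ≇ ρ'`.  Moreover, if for each `▷`-orbit of `R` one fixes a finite family of pairwise
non-isomorphic irreducible representations of the isotropy group `K^{r₀}` exhausting all
its irreducibles, then the sum of the corresponding `P_{(O,ρ)}` over all orbits and all
members equals the unit of `Ξ(R,K)`. -/
theorem statement18 {G : Type} [Group G] [Fintype G] (K : Subgroup G) (R : Set G)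
    (heR : (1 : G) ∈ R)
    (huniq : ∀ (r r' : R) (x x' : K),
      (r : G) * (x : G) = (r' : G) * (x' : G) → r = r' ∧ x = x')
    (act : K → R → R) (coact : K → R → K)
    (hfac : ∀ (x : K) (r : R), (x : G) * (r : G) = (act x r : G) * (coact x r : G))
    -- an orbit datum `(O, r₀, Z = K^{r₀}, κ)` with two irreducible reps of `K^{r₀}`
    (r₀ : R) (Z : Subgroup K) (hZ : ∀ x : K, x ∈ Z ↔ act x r₀ = r₀)
    (κ : R → K) (hκ : ∀ r : R, (∃ x : K, act x r₀ = r) → act (κ r) r₀ = r)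
    (hκ₀ : κ r₀ = 1)
    (ρ ρ' : Rep' ↥Z) (hρ : ρ.IsIrreducible) (hρ' : ρ'.IsIrreducible)
    -- a second orbit datum
    (r₀' : R) (Z' : Subgroup K) (hZ' : ∀ x : K, x ∈ Z' ↔ act x r₀' = r₀')
    (κ' : R → K) (hκ' : ∀ r : R, (∃ x : K, act x r₀' = r) → act (κ' r) r₀' = r)
    (hκ₀' : κ' r₀' = 1)
    (ρ'' : Rep' ↥Z') (hρ'' : ρ''.IsIrreducible)
    -- for each orbit, a base point `b ∈ B` and a complete family of irreps of `K^b`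
    (B : Finset R) (Zf : R → Subgroup K)
    (hZf : ∀ (b : R) (x : K), x ∈ Zf b ↔ act x b = b)
    (κf : R → R → K)
    (hκf : ∀ b ∈ B, ∀ r : R, (∃ x : K, act x b = r) → act (κf b r) b = r)
    (hκf₀ : ∀ b ∈ B, κf b b = 1)
    (hBpart : ∀ r : R, ∃! b : R, b ∈ B ∧ ∃ x : K, act x b = r)
    (m : R → ℕ) (fam : ∀ b : R, Fin (m b) → Rep' ↥(Zf b))
    (hfam_irr : ∀ b ∈ B, ∀ j, (fam b j).IsIrreducible)
    (hfam_distinct : ∀ b ∈ B, ∀ j j', j ≠ j' → ¬ Rep'.Iso (fam b j) (fam b j'))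
    (hfam_all : ∀ b ∈ B, ∀ σ : Rep' ↥(Zf b), σ.IsIrreducible → ∃ j, Rep'.Iso (fam b j) σ) :
    (Ximul act (XiProj act r₀ Z κ ρ) (XiProj act r₀ Z κ ρ) = XiProj act r₀ Z κ ρ) ∧
    (∀ a : R × K → ℂ,
      Ximul act (XiProj act r₀ Z κ ρ) a = Ximul act a (XiProj act r₀ Z κ ρ)) ∧
    ({r : R | ∃ x : K, act x r₀ = r} ≠ {r : R | ∃ x : K, act x r₀' = r} →
      Ximul act (XiProj act r₀ Z κ ρ) (XiProj act r₀' Z' κ' ρ'') = 0) ∧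
    (¬ Rep'.Iso ρ ρ' →
      Ximul act (XiProj act r₀ Z κ ρ) (XiProj act r₀ Z κ ρ') = 0) ∧
    ((∑ b ∈ B, ∑ j : Fin (m b), XiProj act b (Zf b) (κf b) (fam b j))
      = fun p => if p.2 = (1 : K) then 1 else 0) := by
  have hact := isAct_of_factorisation huniq coact hfac
  refine ⟨?_, XiProj_central hact hZ hκ ρ, XiProj_mul_eq_zero hact ρ ρ'', fun hniso => ?_, ?_⟩
  · rw [XiProj_mul_XiProj hact hZ hκ hρ hρ, if_pos (Rep'.Iso.refl ρ), one_smul]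
  · rw [XiProj_mul_XiProj hact hZ hκ hρ hρ', if_neg hniso, zero_smul]
  · ext ⟨r, z⟩
    obtain ⟨b, ⟨hb, hr⟩, hb'⟩ := hBpart r
    simp only [Finset.sum_apply, XiProj_apply]
    -- only the orbit through `r` contributes
    rw [Finset.sum_eq_single_of_mem b hb]
    · simp only [if_pos hr]
      rw [sum_extChi (fam b) (hfam_irr b hb) (hfam_distinct b hb) (hfam_all b hb)]
      have hz : (κf b r)⁻¹ * z * κf b r = 1 ↔ z = 1 := by
        rw [mul_assoc, inv_mul_eq_one, eq_comm, mul_eq_right]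
      by_cases h : z = 1
      · rw [if_pos (hz.2 h), if_pos h]
      · rw [if_neg (mt hz.1 h), if_neg h]
    · intro c hc hcb
      have : ¬ ∃ x : K, act x c = r := fun h => hcb (hb' c ⟨hc, h⟩)
      simp only [if_neg this, Finset.sum_const_zero]
end
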